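/- Let 1 ≤ p < ∞ and f ∈ L^p(ℝ^{m-1}×𝔹^m, ℋ_k). Then 𝒟_k P_H[f] = 0 in ℝ^m_+ × 𝔹^m, and there exists a constant c′_{m,k} > 0 depending only on m and k such that for every y > 0 the function g_y(x′,v) := P_H[f]((x′,y),v) satisfies ‖g_y‖_p ≤ c′_{m,k} ‖f‖_p. -/

import Mathlib

noncomputable section

open MeasureTheory Metric Filter Topology
open scoped RealInnerProductSpace

/-- `ℝ^m` as a Euclidean space. -/
abbrev Evec (m : ℕ) : Type := EuclideanSpace ℝ (Fin m)

/-- Partial derivative in the `i`-th coordinate direction. -/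
def pdv {m : ℕ} (i : Fin m) (f : Evec m → ℝ) (x : Evec m) : ℝ :=
  fderiv ℝ f x (EuclideanSpace.single i 1)

/-- Euclidean Laplacian on `ℝ^m`. -/
def lapl {m : ℕ} (f : Evec m → ℝ) (x : Evec m) : ℝ :=
  ∑ i : Fin m, pdv i (pdv i f) x

/-- `p` is a real-valued polynomial function on `ℝ^m`, homogeneous of degree `k` and
harmonic; i.e. `p ∈ ℋ_k`. -/
def IsHk (m k : ℕ) (p : Evec m → ℝ) : Prop :=
  (∃ P : MvPolynomial (Fin m) ℝ, ∀ x : Evec m, p x = MvPolynomial.eval (fun i => x i) P) ∧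
  (∀ (c : ℝ) (x : Evec m), p (c • x) = c ^ k * p x) ∧
  (∀ x : Evec m, lapl p x = 0)

/-- The surface measure `dS` on the unit sphere `𝕊^{m-1}`, as a measure on `ℝ^m`. -/
def sphereM (m : ℕ) : Measure (Evec m) :=
  Measure.map Subtype.val ((volume : Measure (Evec m)).toSphere)

/-- `ω_m`, the surface area of the unit sphere `𝕊^{m-1}`. -/
def omegaS (m : ℕ) : ℝ := (sphereM m Set.univ).toReal

/-- The constant `c_{m,k} = 2(m+2k-2)/((m-2)ω_m)`. -/
def cmk (m k : ℕ) : ℝ := 2 * ((m : ℝ) + 2 * k - 2) / (((m : ℝ) - 2) * omegaS m)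

/-- The reflection `R_a(u) = u - 2⟨a,u⟩a/|a|²` (in Clifford notation `a u a/|a|²`). -/
def reflv {m : ℕ} (a u : Evec m) : Evec m :=
  u - (2 * ⟪a, u⟫ / ‖a‖ ^ 2) • a

/-- `dim ℋ_k`. -/
def hdim (m k : ℕ) : ℕ :=
  Nat.choose (m + k - 1) (m - 1) - Nat.choose (m + k - 3) (m - 1)

/-- `Z` is the reproducing kernel `Z_k` of `ℋ_k` on the unit sphere: a symmetric,
rotation invariant kernel, bounded by `dim ℋ_k` on the unit ball, belonging to `ℋ_k`
in the first variable and reproducing elements of `ℋ_k` from their spherical values. -/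
def IsZk (m k : ℕ) (Z : Evec m → Evec m → ℝ) : Prop :=
  (∀ v : Evec m, IsHk m k (fun u => Z u v)) ∧
  (∀ p : Evec m → ℝ, IsHk m k p → ∀ v : Evec m, (∫ u, Z u v * p u ∂(sphereM m)) = p v) ∧
  (∀ u v : Evec m, Z u v = Z v u) ∧
  (∀ u v : Evec m, ‖u‖ ≤ 1 → ‖v‖ ≤ 1 → |Z u v| ≤ (hdim m k : ℝ)) ∧
  (∀ (A : Evec m ≃ₗᵢ[ℝ] Evec m) (u v : Evec m), Z (A u) (A v) = Z u v)

/-- The point `(x', y) ∈ ℝ^{d+1}` with first `d` coordinates `x'` and last coordinate `y`. -/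
def upP (d : ℕ) (x' : Evec d) (y : ℝ) : Evec (d + 1) :=
  (EuclideanSpace.equiv (Fin (d + 1)) ℝ).symm
    (Fin.snoc (⇑(EuclideanSpace.equiv (Fin d) ℝ) x') y)

/-- The first `d` coordinates of a point of `ℝ^{d+1}`. -/
def downP (d : ℕ) (x : Evec (d + 1)) : Evec d :=
  (EuclideanSpace.equiv (Fin d) ℝ).symm (fun i => x (Fin.castSucc i))

/-- The last coordinate of a point of `ℝ^{d+1}`. -/
def lastP (d : ℕ) (x : Evec (d + 1)) : ℝ := x (Fin.last d)

/-- The Poisson kernel `P_H` for bosonic Laplacians in the upper half-space `ℝ^{d+1}_+`,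
`P_H(x,t,u,v) = c_{m,k} (y/|x-t|^m) Z_k(R_{x-t}(u), v)` with `m = d+1`, `x = (x',y)`,
`t = (t',0)`. -/
def PH (d k : ℕ) (Z : Evec (d + 1) → Evec (d + 1) → ℝ) (x' : Evec d) (y : ℝ)
    (t' : Evec d) (u v : Evec (d + 1)) : ℝ :=
  cmk (d + 1) k * (y / ‖upP d x' y - upP d t' 0‖ ^ (d + 1)) *
    Z (reflv (upP d x' y - upP d t' 0) u) v

/-- The Poisson integral `P_H[f]` in the upper half-space. -/
def PHint (d k : ℕ) (Z : Evec (d + 1) → Evec (d + 1) → ℝ)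
    (f : Evec d → Evec (d + 1) → ℝ) (x' : Evec d) (y : ℝ) (v : Evec (d + 1)) : ℝ :=
  ∫ t' : Evec d, (∫ u, PH d k Z x' y t' u v * f t' u ∂(sphereM (d + 1)))

/-- The Poisson kernel `P_B` for bosonic Laplacians in the unit ball. -/
def PB (m k : ℕ) (Z : Evec m → Evec m → ℝ) (x ζ ω ν : Evec m) : ℝ :=
  (cmk m k / 2) * ((1 - ‖x‖ ^ 2) / ‖x - ζ‖ ^ m) * Z (reflv (x - ζ) ω) ν

/-- The Poisson integral `P_B[h]` in the unit ball. -/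
def PBint (m k : ℕ) (Z : Evec m → Evec m → ℝ) (h : Evec m → Evec m → ℝ)
    (x ν : Evec m) : ℝ :=
  ∫ ζ, (∫ ω, PB m k Z x ζ ω ν * h ζ ω ∂(sphereM m)) ∂(sphereM m)

/-- Partial derivative in the first (`x`) variable. -/
def pd1 {m : ℕ} (i : Fin m) (f : Evec m → Evec m → ℝ) : Evec m → Evec m → ℝ :=
  fun x u => fderiv ℝ (fun x₁ => f x₁ u) x (EuclideanSpace.single i 1)

/-- Partial derivative in the second (`u`) variable. -/
def pd2 {m : ℕ} (i : Fin m) (f : Evec m → Evec m → ℝ) : Evec m → Evec m → ℝ :=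
  fun x u => fderiv ℝ (fun u₁ => f x u₁) u (EuclideanSpace.single i 1)

/-- The bosonic Laplacian `𝒟_k`. -/
def Dk (m k : ℕ) (f : Evec m → Evec m → ℝ) : Evec m → Evec m → ℝ := fun x u =>
  (∑ i : Fin m, pd1 i (pd1 i f) x u)
    - (4 / ((m : ℝ) + 2 * k - 2)) *
        ∑ i : Fin m, ∑ j : Fin m, u i * pd1 i (pd2 j (pd1 j f)) x u
    + (4 * ‖u‖ ^ 2 / (((m : ℝ) + 2 * k - 2) * ((m : ℝ) + 2 * k - 4))) *
        ∑ i : Fin m, ∑ j : Fin m, pd2 i (pd1 i (pd2 j (pd1 j f))) x u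

/-- `f ∈ C²(Ω×𝔹^m, ℋ_k)`: twice continuously differentiable on `Ω × 𝔹^m` and, for each
fixed `x ∈ Ω`, coinciding in the second variable with an element of `ℋ_k`. -/
def C2Hk (m k : ℕ) (Ω : Set (Evec m)) (f : Evec m → Evec m → ℝ) : Prop :=
  ContDiffOn ℝ 2 (fun q : Evec m × Evec m => f q.1 q.2) (Ω ×ˢ ball (0 : Evec m) 1) ∧
  ∀ x ∈ Ω, ∃ q, IsHk m k q ∧ ∀ u ∈ closedBall (0 : Evec m) 1, f x u = q u

/-- The `L^p` norm `(∫_{ℝ^{m-1}} ∫_{𝕊^{m-1}} |f(x',u)|^p dS(u) dx')^{1/p}` (`m = d+1`),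
valued in `ℝ≥0∞`. -/
def lpH (d : ℕ) (p : ℝ) (f : Evec d → Evec (d + 1) → ℝ) : ENNReal :=
  (∫⁻ x' : Evec d, ∫⁻ u, ENNReal.ofReal (|f x' u| ^ p) ∂(sphereM (d + 1))) ^ (1 / p)

/-- `f ∈ L^p(ℝ^{m-1}×𝔹^m, ℋ_k)` (`m = d+1`). -/
def MemLpH (d k : ℕ) (p : ℝ) (f : Evec d → Evec (d + 1) → ℝ) : Prop :=
  Measurable (fun q : Evec d × Evec (d + 1) => f q.1 q.2) ∧
  (∀ x' : Evec d, ∃ q, IsHk (d + 1) k q ∧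
    ∀ u ∈ closedBall (0 : Evec (d + 1)) 1, f x' u = q u) ∧
  lpH d p f < ⊤

/-- The `L^p` norm `(∫_{𝕊^{m-1}} ∫_{𝕊^{m-1}} |h(ζ,ω)|^p dS(ω) dS(ζ))^{1/p}`,
valued in `ℝ≥0∞`. -/
def lpS (m : ℕ) (p : ℝ) (h : Evec m → Evec m → ℝ) : ENNReal :=
  (∫⁻ ζ, ∫⁻ ω, ENNReal.ofReal (|h ζ ω| ^ p) ∂(sphereM m) ∂(sphereM m)) ^ (1 / p)

/-- `h ∈ L^p(𝕊^{m-1}×𝔹^m, ℋ_k)`. -/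
def MemLpS (m k : ℕ) (p : ℝ) (h : Evec m → Evec m → ℝ) : Prop :=
  Measurable (fun q : Evec m × Evec m => h q.1 q.2) ∧
  (∀ ζ : Evec m, ‖ζ‖ = 1 → ∃ q, IsHk m k q ∧
    ∀ ω ∈ closedBall (0 : Evec m) 1, h ζ ω = q ω) ∧
  lpS m p h < ⊤

/-- Iterated partial derivative `D_x^α` in the first variable, for a multi-index `α ∈ ℕ^m`. -/
def Dx {m : ℕ} (α : Fin m → ℕ) (f : Evec m → Evec m → ℝ) : Evec m → Evec m → ℝ :=
  (List.finRange m).foldr (fun i g => (pd1 i)^[α i] g) f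

/-- Iterated partial derivative `D_ν^β` in the second variable, for a multi-index `β ∈ ℕ^m`. -/
def Dv {m : ℕ} (β : Fin m → ℕ) (f : Evec m → Evec m → ℝ) : Evec m → Evec m → ℝ :=
  (List.finRange m).foldr (fun i g => (pd2 i)^[β i] g) f

open scoped ContDiff

open MvPolynomial in
/-- Coordinates `w`, `q = R_w v`, the functions `σ = |w|⁻²`, `ρ = |w|^{-m}` and the coordinate
derivations `X i = ∂/∂w_i`, `V i = ∂/∂v_i`, recorded through their multiplication table. -/
structure IsReflFrame {m : ℕ} {A : Type*} [CommRing A] [Algebra ℝ A]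
    (X V : Fin m → Derivation ℝ A A) (w q : Fin m → A) (σ ρ : A) : Prop where
  X_w : ∀ i j, X i (w j) = if i = j then 1 else 0
  V_w : ∀ i j, V i (w j) = 0
  X_q : ∀ i j, X i (q j) = 2 * σ * ((if i = j then ∑ l, w l * q l else 0) - q i * w j)
  V_q : ∀ i j, V i (q j) = (if i = j then 1 else 0) - 2 * σ * w i * w j
  X_σ : ∀ i, X i σ = -2 * w i * σ ^ 2
  V_σ : ∀ i, V i σ = 0
  X_ρ : ∀ i, X i ρ = -m * w i * σ * ρ
  V_ρ : ∀ i, V i ρ = 0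
  σ_mul : σ * ∑ i, w i * w i = 1

namespace IsReflFrame

open MvPolynomial

variable {m : ℕ} {A : Type*} [CommRing A] [Algebra ℝ A]

/-- The `n`-fold derivative of the polynomial `r` in the direction `w`, evaluated at `q`. -/
noncomputable def dirD (w q : Fin m → A) : ℕ → MvPolynomial (Fin m) ℝ → A
  | 0, r => aeval q r
  | n + 1, r => ∑ l, w l * dirD w q n (pderiv l r)

lemma dirD_succ (w q : Fin m → A) (n : ℕ) (r : MvPolynomial (Fin m) ℝ) :
    dirD w q (n + 1) r = ∑ l, w l * dirD w q n (pderiv l r) := rfl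

lemma dirD_add (w q : Fin m → A) (n : ℕ) (r s : MvPolynomial (Fin m) ℝ) :
    dirD w q n (r + s) = dirD w q n r + dirD w q n s := by
  induction n generalizing r s with
  | zero => simp [dirD]
  | succ n ih => simp [dirD, ih, mul_add, Finset.sum_add_distrib]

lemma dirD_smul (w q : Fin m → A) (n : ℕ) (c : ℝ) (r : MvPolynomial (Fin m) ℝ) :
    dirD w q n (c • r) = c • dirD w q n r := by
  induction n generalizing r with
  | zero => simp [dirD]
  | succ n ih => simp [dirD, ih, Finset.smul_sum]

lemma dirD_zero (w q : Fin m → A) (n : ℕ) : dirD w q n 0 = 0 := by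
  simpa using dirD_smul w q n 0 0

lemma dirD_sum (w q : Fin m → A) (n : ℕ) {ι : Type*} (s : Finset ι)
    (r : ι → MvPolynomial (Fin m) ℝ) :
    dirD w q n (∑ i ∈ s, r i) = ∑ i ∈ s, dirD w q n (r i) := by
  classical
  induction s using Finset.induction_on with
  | empty => simp [dirD_zero]
  | insert a s ha ih => simp [Finset.sum_insert ha, dirD_add, ih]

lemma pderiv_comm (i j : Fin m) (r : MvPolynomial (Fin m) ℝ) :
    pderiv i (pderiv j r) = pderiv j (pderiv i r) := by
  have h : ⁅pderiv (R := ℝ) i, pderiv (R := ℝ) j⁆ = 0 := by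
    apply derivation_ext
    intro l
    rw [Derivation.commutator_apply]
    simp [pderiv_X, Pi.single_apply, apply_ite]
  have := congrArg (fun D => D r) h
  simpa [Derivation.commutator_apply, sub_eq_zero] using this

/-- Euler's relation `∑ qᵢ ∂ᵢ r = κ r`. -/
def Euler (κ : ℤ) (r : MvPolynomial (Fin m) ℝ) : Prop :=
  ∑ i, X i * pderiv i r = (κ : MvPolynomial (Fin m) ℝ) * r

lemma Euler.pderiv {κ : ℤ} {r : MvPolynomial (Fin m) ℝ} (h : Euler κ r) (l : Fin m) :
    Euler (κ - 1) (pderiv l r) := by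
  have h1 := congrArg (fun s => MvPolynomial.pderiv l s) h
  simp only [map_sum, pderiv_mul, pderiv_X, Pi.single_apply, ite_mul, one_mul, zero_mul,
    Finset.sum_add_distrib] at h1
  have h2 : MvPolynomial.pderiv l (κ : MvPolynomial (Fin m) ℝ) = 0 :=
    Derivation.map_intCast _ _
  unfold Euler
  simp_rw [pderiv_comm _ l r]
  rw [h2] at h1
  simp only [Finset.sum_ite_eq', Finset.mem_univ, if_true] at h1
  push_cast
  linear_combination h1

lemma sum_q_dirD (w q : Fin m → A) (n : ℕ) {κ : ℤ} {r : MvPolynomial (Fin m) ℝ}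
    (h : Euler κ r) : ∑ i, q i * dirD w q n (pderiv i r) = ((κ : A) - n) * dirD w q n r := by
  induction n generalizing r κ with
  | zero =>
    have := congrArg (aeval q) h
    simpa [dirD] using this
  | succ n ih =>
    simp only [dirD, Finset.mul_sum]
    rw [Finset.sum_comm]
    refine Finset.sum_congr rfl fun l _ => ?_
    have := ih (h.pderiv l)
    simp_rw [pderiv_comm l]
    calc _ = w l * ∑ i, q i * dirD w q n (pderiv i (pderiv l r)) := by
            rw [Finset.mul_sum]; exact Finset.sum_congr rfl fun _ _ => by ring
      _ = _ := by rw [this]; push_cast; ring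

lemma sum_dirD_pderiv_pderiv (w q : Fin m → A) (n : ℕ) {r : MvPolynomial (Fin m) ℝ}
    (h : ∑ i, pderiv i (pderiv i r) = 0) : ∑ i, dirD w q n (pderiv i (pderiv i r)) = 0 := by
  rw [← dirD_sum, h, dirD_zero]

lemma derivation_two (D : Derivation ℝ A A) : D 2 = 0 := by
  simpa using D.map_natCast 2

lemma derivation_aeval (D : Derivation ℝ A A) (q : Fin m → A) (r : MvPolynomial (Fin m) ℝ) :
    D (aeval q r) = ∑ j, aeval q (pderiv j r) * D (q j) := by
  induction r using MvPolynomial.induction_on with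
  | C c => simp
  | add r s hr hs => simp [hr, hs, add_mul, Finset.sum_add_distrib]
  | mul_X r n hr =>
    simp only [map_mul, aeval_X, Derivation.leibniz, hr, smul_eq_mul, pderiv_X,
      map_add, add_mul, Finset.sum_add_distrib]
    have h : ∑ j, aeval q r * aeval q (Pi.single (M := fun _ => MvPolynomial (Fin m) ℝ) j 1 n) *
        D (q j) = aeval q r * D (q n) := by
      rw [Finset.sum_eq_single n]
      · simp
      · intro j _ hj
        simp [hj.symm]
      · simp
    rw [h, Finset.mul_sum]
    congr 1
    exact Finset.sum_congr rfl fun _ _ => by ring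

variable {X V : Fin m → Derivation ℝ A A} {w q : Fin m → A} {σ ρ : A}

lemma X_dirD (F : IsReflFrame X V w q σ ρ) (i : Fin m) (n : ℕ) (r : MvPolynomial (Fin m) ℝ) :
    X i (dirD w q n r) = n * dirD w q (n - 1) (pderiv i r) +
      2 * σ * ((∑ l, w l * q l) * dirD w q n (pderiv i r) - q i * dirD w q (n + 1) r) := by
  induction n generalizing r with
  | zero =>
    simp only [dirD, derivation_aeval, F.X_q, mul_sub, mul_ite, mul_zero, Finset.sum_sub_distrib,
      Finset.sum_ite_eq, Finset.mem_univ, if_true]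
    have h : ∑ l, aeval q (pderiv l r) * (2 * σ * (q i * w l))
        = 2 * σ * (q i * ∑ l, w l * aeval q (pderiv l r)) := by
      simp only [Finset.mul_sum]
      exact Finset.sum_congr rfl fun _ _ => by ring
    rw [h]
    push_cast
    ring
  | succ n ih =>
    rw [dirD_succ, map_sum]
    simp only [Derivation.leibniz, smul_eq_mul, F.X_w, ih, mul_ite, mul_zero, mul_one,
      Finset.sum_add_distrib, Finset.sum_ite_eq, Finset.mem_univ, if_true]
    have h1 : ∑ l, w l * (n * dirD w q (n - 1) (pderiv i (pderiv l r)))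
        = n * dirD w q n (pderiv i r) := by
      cases n with
      | zero => simp
      | succ n =>
        simp only [dirD, Nat.add_sub_cancel, Finset.mul_sum, pderiv_comm i]
        exact Finset.sum_congr rfl fun _ _ => by ring
    have h2 : ∑ l, w l * (2 * σ * ((∑ l, w l * q l) * dirD w q n (pderiv i (pderiv l r)) -
        q i * dirD w q (n + 1) (pderiv l r))) = 2 * σ * ((∑ l, w l * q l) *
          dirD w q (n + 1) (pderiv i r) - q i * dirD w q (n + 2) r) := by
      rw [dirD_succ w q n, dirD_succ w q (n + 1), Finset.mul_sum, Finset.mul_sum,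
        ← Finset.sum_sub_distrib,
        Finset.mul_sum]
      simp only [pderiv_comm i]
      exact Finset.sum_congr rfl fun _ _ => by ring
    simp only [mul_add, Finset.sum_add_distrib, h1, h2]
    push_cast
    ring

lemma V_dirD (F : IsReflFrame X V w q σ ρ) (i : Fin m) (n : ℕ) (r : MvPolynomial (Fin m) ℝ) :
    V i (dirD w q n r) = dirD w q n (pderiv i r) - 2 * σ * w i * dirD w q (n + 1) r := by
  induction n generalizing r with
  | zero =>
    simp only [dirD, derivation_aeval, F.V_q, mul_sub, mul_ite, mul_zero, mul_one,
      Finset.sum_sub_distrib, Finset.sum_ite_eq, Finset.mem_univ, if_true, Finset.mul_sum]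
    congr 1
    exact Finset.sum_congr rfl fun _ _ => by ring
  | succ n ih =>
    rw [dirD_succ, map_sum]
    simp only [Derivation.leibniz, smul_eq_mul, F.V_w, ih, mul_zero, add_zero]
    rw [dirD_succ w q n, dirD_succ w q (n + 1), Finset.mul_sum, ← Finset.sum_sub_distrib]
    simp only [pderiv_comm i]
    exact Finset.sum_congr rfl fun _ _ => by ring

lemma X_sum_w_q (F : IsReflFrame X V w q σ ρ) (i : Fin m) :
    X i (∑ l, w l * q l) = 2 * σ * (∑ l, w l * q l) * w i - q i := by
  simp only [map_sum, Derivation.leibniz, smul_eq_mul, F.X_w, F.X_q, mul_ite, mul_zero, mul_one,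
    mul_sub, Finset.sum_add_distrib, Finset.sum_ite_eq, Finset.mem_univ, if_true,
    Finset.sum_sub_distrib]
  have : ∑ l, w l * (2 * σ * (q i * w l)) = 2 * q i * (σ * ∑ l, w l * w l) := by
    simp only [Finset.mul_sum]
    exact Finset.sum_congr rfl fun _ _ => by ring
  rw [this, F.σ_mul]
  ring

lemma V_sum_w_q (F : IsReflFrame X V w q σ ρ) (i : Fin m) :
    V i (∑ l, w l * q l) = - w i := by
  simp only [map_sum, Derivation.leibniz, smul_eq_mul, F.V_w, F.V_q, mul_ite, mul_zero, mul_one,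
    mul_sub, Finset.sum_add_distrib, Finset.sum_ite_eq, Finset.mem_univ, if_true,
    Finset.sum_sub_distrib]
  have : ∑ l, w l * (2 * σ * w i * w l) = 2 * w i * (σ * ∑ l, w l * w l) := by
    simp only [Finset.mul_sum]
    exact Finset.sum_congr rfl fun _ _ => by ring
  rw [this, F.σ_mul]
  simp
  ring


lemma Euler.sum_smul {κ : ℤ} (b : Fin m → ℝ) {s : Fin m → MvPolynomial (Fin m) ℝ}
    (h : ∀ i, Euler κ (s i)) : Euler κ (∑ l, b l • s l) := by
  unfold Euler at *
  simp only [map_sum, Derivation.map_smul, Finset.mul_sum]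
  rw [Finset.sum_comm]
  refine Finset.sum_congr rfl fun l _ => ?_
  simp only [mul_smul_comm, ← Finset.smul_sum, h]

lemma sum_pderiv_pderiv_sum_smul (b : Fin m → ℝ) {p : MvPolynomial (Fin m) ℝ}
    (h : ∑ i, pderiv i (pderiv i p) = 0) :
    ∑ i, pderiv i (pderiv i (∑ l, b l • pderiv l p)) = 0 := by
  simp only [map_sum, Derivation.map_smul]
  rw [Finset.sum_comm]
  refine Finset.sum_eq_zero fun l _ => ?_
  simp only [← Finset.smul_sum, pderiv_comm _ l]
  rw [← map_sum, h, map_zero, smul_zero]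

lemma sum_b_dirD (w q : Fin m → A) (b : Fin m → ℝ) (p : MvPolynomial (Fin m) ℝ) (n : ℕ) :
    ∑ l, algebraMap ℝ A (b l) * dirD w q n (pderiv l p)
      = dirD w q n (∑ l, b l • pderiv l p) := by
  simp only [dirD_sum, dirD_smul]
  simp only [Algebra.smul_def]

/-- The divergence-type operator `∑ⱼ ∂_{vⱼ} ∂_{wⱼ}`. -/
noncomputable def divT (X V : Fin m → Derivation ℝ A A) (g : A) : A := ∑ j, V j (X j g)

section Identity

variable (F : IsReflFrame X V w q σ ρ) (b : Fin m → ℝ) (p : MvPolynomial (Fin m) ℝ)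

include F

lemma X_sum_b (i : Fin m) : X i (∑ l, algebraMap ℝ A (b l) * w l) = algebraMap ℝ A (b i) := by
  simp [map_sum, Derivation.leibniz, F.X_w]

lemma V_sum_b (i : Fin m) : V i (∑ l, algebraMap ℝ A (b l) * w l) = 0 := by
  simp [map_sum, Derivation.leibniz, F.V_w]

lemma X_kernel (i : Fin m) (a l : A) (ha : a = ∑ l, w l * q l)
    (hl : l = ∑ j, algebraMap ℝ A (b j) * w j) :
    X i (ρ * l * dirD w q 0 p) = -m * σ * ρ * l * dirD w q 0 p * w i
      + ρ * dirD w q 0 p * algebraMap ℝ A (b i)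
      + 2 * σ * ρ * l * a * dirD w q 0 (pderiv i p) - 2 * σ * ρ * l * dirD w q 1 p * q i := by
  have h1 := F.X_sum_b b i
  have h3 := F.X_dirD i 0 p
  rw [← ha] at h3
  rw [← hl] at h1
  simp only [Derivation.leibniz, smul_eq_mul, F.X_ρ, h1, h3]
  push_cast
  ring

lemma sum_X_X_kernel (a l : A) (ha : a = ∑ l, w l * q l)
    (hl : l = ∑ j, algebraMap ℝ A (b j) * w j) {k : ℕ} (hp : Euler k p)
    (hΔ : ∑ i, pderiv i (pderiv i p) = 0) :
    ∑ i, X i (X i (ρ * l * dirD w q 0 p)) =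
      4 * σ * ρ * (a * dirD w q 0 (∑ l, b l • pderiv l p)
        - (∑ j, algebraMap ℝ A (b j) * q j) * dirD w q 1 p)
      + 4 * ρ * l * σ ^ 2 * (-(m + 2 * k - 4) * a * dirD w q 1 p
        + (∑ i, q i * q i) * dirD w q 2 p) - 4 * ρ * l * σ * k * dirD w q 0 p := by
  have key : ∀ i, X i (X i (ρ * l * dirD w q 0 p)) =
      ((2 * m + m ^ 2) * σ ^ 2 * ρ * l * dirD w q 0 p) * (w i * w i)
      + (-m * σ * ρ * l * dirD w q 0 p - 4 * σ ^ 2 * ρ * l * a * dirD w q 1 p) * 1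
      + (-2 * m * σ * ρ * dirD w q 0 p) * (algebraMap ℝ A (b i) * w i)
      + (-4 * m * σ ^ 2 * ρ * l * a) * (w i * dirD w q 0 (pderiv i p))
      + ((4 * m + 8) * σ ^ 2 * ρ * l * dirD w q 1 p) * (w i * q i)
      + (4 * σ * ρ * a) * (algebraMap ℝ A (b i) * dirD w q 0 (pderiv i p))
      + (-4 * σ * ρ * dirD w q 1 p) * (algebraMap ℝ A (b i) * q i)
      + (-4 * σ * ρ * l) * (q i * dirD w q 0 (pderiv i p))
      + (4 * σ ^ 2 * ρ * l * a ^ 2) * (dirD w q 0 (pderiv i (pderiv i p)))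
      + (-8 * σ ^ 2 * ρ * l * a) * (q i * dirD w q 1 (pderiv i p))
      + (4 * σ ^ 2 * ρ * l * dirD w q 2 p) * (q i * q i) := by
    intro i
    have h1 := F.X_sum_b b i
    have h2 := F.X_sum_w_q i
    have h3 := F.X_dirD i 0 p
    have h4 := F.X_dirD i 0 (pderiv i p)
    have h5 := F.X_dirD i 1 p
    have h6 := F.X_w i i
    have h7 := F.X_q i i
    rw [← ha] at h2 h3 h4 h5 h7
    rw [← hl] at h1
    rw [if_pos rfl] at h6 h7
    rw [F.X_kernel b p i a l ha hl]
    simp only [map_add, map_sub, map_neg, Derivation.leibniz, smul_eq_mul, F.X_ρ, F.X_σ, h1, h2,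
      h3, h4, h5, h6, h7, Derivation.map_natCast, Derivation.map_algebraMap,
      derivation_two]
    push_cast
    ring
  simp only [key, Finset.sum_add_distrib, ← Finset.mul_sum]
  rw [← ha, ← hl, sum_b_dirD, sum_q_dirD w q 0 hp, sum_q_dirD w q 1 hp,
    sum_dirD_pderiv_pderiv w q 0 hΔ, ← dirD_succ w q 0]
  simp only [Finset.sum_const, Finset.card_univ, Fintype.card_fin, nsmul_eq_mul]
  push_cast
  linear_combination ((2 * m + m ^ 2) * σ * ρ * l * dirD w q 0 p) * F.σ_mul

lemma divT_kernel (a l : A) (ha : a = ∑ l, w l * q l)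
    (hl : l = ∑ j, algebraMap ℝ A (b j) * w j) {k : ℕ} (hp : Euler k p)
    (hΔ : ∑ i, pderiv i (pderiv i p) = 0) :
    divT X V (ρ * l * dirD w q 0 p) =
      ρ * dirD w q 0 (∑ l, b l • pderiv l p)
        - (m + 2 * k - 2) * (σ * ρ * l * dirD w q 1 p) := by
  have key : ∀ i, V i (X i (ρ * l * dirD w q 0 p)) =
      ((-m - 2) * σ * ρ * l) * (w i * dirD w q 0 (pderiv i p))
      + ((2 * m + 4) * σ ^ 2 * ρ * l * dirD w q 1 p) * (w i * w i)
      + ρ * (algebraMap ℝ A (b i) * dirD w q 0 (pderiv i p))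
      + (-2 * σ * ρ * dirD w q 1 p) * (algebraMap ℝ A (b i) * w i)
      + (2 * σ * ρ * l * a) * (dirD w q 0 (pderiv i (pderiv i p)))
      + (-4 * σ ^ 2 * ρ * l * a) * (w i * dirD w q 1 (pderiv i p))
      + (-2 * σ * ρ * l) * (q i * dirD w q 1 (pderiv i p))
      + (4 * σ ^ 2 * ρ * l * dirD w q 2 p) * (w i * q i)
      + (-2 * σ * ρ * l * dirD w q 1 p) * 1 := by
    intro i
    have h1 := F.V_sum_b b i
    have h2 := F.V_sum_w_q i
    have h3 := F.V_dirD i 0 p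
    have h4 := F.V_dirD i 0 (pderiv i p)
    have h5 := F.V_dirD i 1 p
    have h7 := F.V_q i i
    rw [← ha] at h2
    rw [← hl] at h1
    rw [if_pos rfl] at h7
    rw [F.X_kernel b p i a l ha hl]
    simp only [map_add, map_sub, map_neg, Derivation.leibniz, smul_eq_mul, F.V_ρ, F.V_σ, h1, h2,
      h3, h4, h5, F.V_w, h7, Derivation.map_natCast, Derivation.map_algebraMap,
      derivation_two]
    push_cast
    ring
  unfold divT
  simp only [key, Finset.sum_add_distrib, ← Finset.mul_sum]
  rw [← ha, ← hl, sum_b_dirD, sum_q_dirD w q 1 hp,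
    sum_dirD_pderiv_pderiv w q 0 hΔ, ← dirD_succ w q 0, ← dirD_succ w q 1]
  simp only [Finset.sum_const, Finset.card_univ, Fintype.card_fin, nsmul_eq_mul]
  push_cast
  linear_combination ((2 * m + 4) * σ * ρ * l * dirD w q 1 p) * F.σ_mul

lemma X_divT_kernel (i : Fin m) (r : MvPolynomial (Fin m) ℝ) (N a l : A)
    (hN : X i N = 0) (ha : a = ∑ l, w l * q l)
    (hl : l = ∑ j, algebraMap ℝ A (b j) * w j) :
    X i (ρ * dirD w q 0 r - N * (σ * ρ * l * dirD w q 1 p)) =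
      (-m * σ * ρ * dirD w q 0 r) * w i + 2 * σ * ρ * a * dirD w q 0 (pderiv i r)
      - 2 * σ * ρ * dirD w q 1 r * q i + N * (m + 2) * σ ^ 2 * ρ * l * dirD w q 1 p * w i
      - N * σ * ρ * dirD w q 1 p * algebraMap ℝ A (b i)
      - N * σ * ρ * l * dirD w q 0 (pderiv i p)
      - 2 * N * σ ^ 2 * ρ * l * a * dirD w q 1 (pderiv i p)
      + 2 * N * σ ^ 2 * ρ * l * dirD w q 2 p * q i := by
  have h1 := F.X_sum_b b i
  have h3 := F.X_dirD i 0 r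
  have h5 := F.X_dirD i 1 p
  rw [← ha] at h3 h5
  rw [← hl] at h1
  simp only [map_sub, Derivation.leibniz, smul_eq_mul, F.X_ρ, F.X_σ, h1, h3, h5, hN]
  push_cast
  ring

/-- The bosonic Laplacian annihilates `ρ ℓ p(R_w v)`. -/
theorem bosonic_kernel_identity {k : ℕ} (hp : Euler k p)
    (hΔ : ∑ i, pderiv i (pderiv i p) = 0) (g : A)
    (hg : g = ρ * (∑ j, algebraMap ℝ A (b j) * w j) * aeval q p) :
    ((m : A) + 2 * k - 2) * (m + 2 * k - 4) * ∑ i, X i (X i g)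
      - 4 * (m + 2 * k - 4) * ∑ i, (q i - 2 * σ * (∑ l, w l * q l) * w i) * X i (divT X V g)
      + 4 * (∑ i, q i * q i) * divT X V (divT X V g) = 0 := by
  obtain ⟨a, ha⟩ : ∃ a, a = ∑ l, w l * q l := ⟨_, rfl⟩
  obtain ⟨l, hl⟩ : ∃ l, l = ∑ j, algebraMap ℝ A (b j) * w j := ⟨_, rfl⟩
  obtain ⟨r, hr⟩ : ∃ r, r = ∑ l, b l • pderiv l p := ⟨_, rfl⟩
  obtain ⟨N, hN⟩ : ∃ N : A, N = m + 2 * k - 2 := ⟨_, rfl⟩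
  have hXN : ∀ i, X i N = 0 := by
    intro i
    simp [hN, Derivation.leibniz, derivation_two]
  have hVN : ∀ i, V i N = 0 := by
    intro i
    simp [hN, Derivation.leibniz, derivation_two]
  have hrE : Euler ((k : ℤ) - 1) r := by
    rw [hr]
    exact Euler.sum_smul b fun i => hp.pderiv i
  have hrΔ : ∑ i, pderiv i (pderiv i r) = 0 := by
    rw [hr]
    exact sum_pderiv_pderiv_sum_smul b hΔ
  have hg' : g = ρ * l * dirD w q 0 p := by rw [hg, hl]; rfl
  rw [hg', F.sum_X_X_kernel b p a l ha hl hp hΔ, F.divT_kernel b p a l ha hl hp hΔ, ← hr, ← hN,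
    ← ha]
  have e2 : ∑ i, (q i - 2 * σ * a * w i) *
        X i (ρ * dirD w q 0 r - N * (σ * ρ * l * dirD w q 1 p)) =
      N * σ * a * (ρ * dirD w q 0 r - N * (σ * ρ * l * dirD w q 1 p))
      - N * ρ * σ * (∑ j, algebraMap ℝ A (b j) * q j) * dirD w q 1 p
      + 2 * N * ρ * l * a * σ ^ 2 * dirD w q 1 p - N * k * ρ * l * σ * dirD w q 0 p
      - 2 * σ * (∑ i, q i * q i) * (ρ * dirD w q 1 r - N * (σ * ρ * l * dirD w q 2 p)) := by
    have key : ∀ i, (q i - 2 * σ * a * w i) *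
        X i (ρ * dirD w q 0 r - N * (σ * ρ * l * dirD w q 1 p)) =
        (-m * σ * ρ * dirD w q 0 r + N * (m + 2) * σ ^ 2 * ρ * l * dirD w q 1 p
          - 2 * σ * a * (- 2 * σ * ρ * dirD w q 1 r + 2 * N * σ ^ 2 * ρ * l * dirD w q 2 p))
            * (w i * q i)
        + (2 * σ * ρ * a) * (q i * dirD w q 0 (pderiv i r))
        + (- 2 * σ * ρ * dirD w q 1 r + 2 * N * σ ^ 2 * ρ * l * dirD w q 2 p) * (q i * q i)
        + (- N * σ * ρ * dirD w q 1 p) * (algebraMap ℝ A (b i) * q i)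
        + (- N * σ * ρ * l) * (q i * dirD w q 0 (pderiv i p))
        + (- 2 * N * σ ^ 2 * ρ * l * a) * (q i * dirD w q 1 (pderiv i p))
        + (- 2 * σ * a * (-m * σ * ρ * dirD w q 0 r
            + N * (m + 2) * σ ^ 2 * ρ * l * dirD w q 1 p)) * (w i * w i)
        + (- 2 * σ * a * (2 * σ * ρ * a)) * (w i * dirD w q 0 (pderiv i r))
        + (2 * σ * a * N * σ * ρ * dirD w q 1 p) * (algebraMap ℝ A (b i) * w i)
        + (2 * σ * a * N * σ * ρ * l) * (w i * dirD w q 0 (pderiv i p))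
        + (4 * σ * a * N * σ ^ 2 * ρ * l * a) * (w i * dirD w q 1 (pderiv i p)) := by
      intro i
      rw [F.X_divT_kernel b p i r N a l (hXN i) ha hl]
      ring
    simp only [key, Finset.sum_add_distrib, ← Finset.mul_sum]
    rw [← ha, ← hl, sum_q_dirD w q 0 hp, sum_q_dirD w q 1 hp, sum_q_dirD w q 0 hrE,
      ← dirD_succ w q 0, ← dirD_succ w q 0, ← dirD_succ w q 1]
    push_cast
    linear_combination (- 2 * a * (-m * σ * ρ * dirD w q 0 r
            + N * (m + 2) * σ ^ 2 * ρ * l * dirD w q 1 p)) * F.σ_mul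
            + (- σ * a * ρ * dirD w q 0 r + N * σ ^ 2 * a * ρ * l * dirD w q 1 p) * hN
  have e3 : divT X V (ρ * dirD w q 0 r - N * (σ * ρ * l * dirD w q 1 p)) =
      - 2 * (N - 2) * σ * ρ * dirD w q 1 r + N * (N - 2) * ρ * l * σ ^ 2 * dirD w q 2 p := by
    have key : ∀ i, V i (X i (ρ * dirD w q 0 r - N * (σ * ρ * l * dirD w q 1 p))) =
        ((-m - 2) * σ * ρ) * (w i * dirD w q 0 (pderiv i r))
        + ((2 * m + 4) * σ ^ 2 * ρ * dirD w q 1 r - 2 * N * (m + 2) * σ ^ 3 * ρ * l * dirD w q 2 p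
            - 4 * N * σ ^ 3 * ρ * l * dirD w q 2 p) * (w i * w i)
        + (2 * σ * ρ * a) * dirD w q 0 (pderiv i (pderiv i r))
        + (- 4 * σ ^ 2 * ρ * a) * (w i * dirD w q 1 (pderiv i r))
        + (- 2 * σ * ρ) * (q i * dirD w q 1 (pderiv i r))
        + (4 * σ ^ 2 * ρ * dirD w q 2 r - 4 * N * σ ^ 3 * ρ * l * dirD w q 3 p) * (w i * q i)
        + (- 2 * σ * ρ * dirD w q 1 r + 2 * N * σ ^ 2 * ρ * l * dirD w q 2 p) * 1
        + (N * (m + 6) * σ ^ 2 * ρ * l) * (w i * dirD w q 1 (pderiv i p))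
        + (- N * σ * ρ) * (algebraMap ℝ A (b i) * dirD w q 1 (pderiv i p))
        + (2 * N * σ ^ 2 * ρ * dirD w q 2 p) * (algebraMap ℝ A (b i) * w i)
        + (- N * σ * ρ * l) * dirD w q 0 (pderiv i (pderiv i p))
        + (- 2 * N * σ ^ 2 * ρ * l * a) * dirD w q 1 (pderiv i (pderiv i p))
        + (4 * N * σ ^ 3 * ρ * l * a) * (w i * dirD w q 2 (pderiv i p))
        + (2 * N * σ ^ 2 * ρ * l) * (q i * dirD w q 2 (pderiv i p)) := by
      intro i
      have h1 := F.V_sum_b b i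
      have h2 := F.V_sum_w_q i
      have h7 := F.V_q i i
      rw [← ha] at h2
      rw [← hl] at h1
      rw [if_pos rfl] at h7
      rw [F.X_divT_kernel b p i r N a l (hXN i) ha hl]
      simp only [map_add, map_sub, map_neg, Derivation.leibniz, smul_eq_mul, F.V_ρ, F.V_σ, h1, h2,
        F.V_dirD, F.V_w, h7, Derivation.map_natCast, Derivation.map_algebraMap,
        derivation_two, hVN, Derivation.leibniz_pow]
      push_cast
      ring
    unfold divT
    simp only [key, Finset.sum_add_distrib, ← Finset.mul_sum]
    rw [← ha, ← hl, sum_b_dirD, ← hr, sum_q_dirD w q 2 hp, sum_q_dirD w q 1 hrE,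
      sum_dirD_pderiv_pderiv w q 0 hΔ, sum_dirD_pderiv_pderiv w q 1 hΔ,
      sum_dirD_pderiv_pderiv w q 0 hrΔ, ← dirD_succ w q 0, ← dirD_succ w q 1, ← dirD_succ w q 1,
      ← dirD_succ w q 2]
    simp only [Finset.sum_const, Finset.card_univ, Fintype.card_fin, nsmul_eq_mul]
    push_cast
    linear_combination ((2 * m + 4) * σ * ρ * dirD w q 1 r
      - 2 * N * (m + 2) * σ ^ 2 * ρ * l * dirD w q 2 p
      - 4 * N * σ ^ 2 * ρ * l * dirD w q 2 p) * F.σ_mul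
      + (σ * ρ * dirD w q 1 r - N * σ ^ 2 * ρ * l * dirD w q 2 p) * hN
  rw [e2, e3]
  rw [show (m : A) + 2 * k - 4 = N - 2 by rw [hN]; ring]
  ring

end Identity

end IsReflFrame

section SmoothOn

variable {E : Type*} {O : Set E}

open Classical in
/-- Extension by zero of a function defined on `O`. -/
noncomputable def zeroExt (g : O → ℝ) (x : E) : ℝ := if h : x ∈ O then g ⟨x, h⟩ else 0

lemma zeroExt_of_mem (g : O → ℝ) {x : E} (h : x ∈ O) : zeroExt g x = g ⟨x, h⟩ := by
  simp [zeroExt, h]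

variable [NormedAddCommGroup E] [NormedSpace ℝ E]

variable (O) in
/-- The algebra of real smooth functions on `O`. -/
noncomputable def smoothAlg : Subalgebra ℝ (O → ℝ) where
  carrier := {g | ContDiffOn ℝ ∞ (zeroExt g) O}
  mul_mem' {a b} ha hb := (ContDiffOn.mul ha hb).congr fun x hx => by
    simp [zeroExt_of_mem _ hx]
  add_mem' {a b} ha hb := (ContDiffOn.add ha hb).congr fun x hx => by
    simp [zeroExt_of_mem _ hx]
  algebraMap_mem' r := (contDiffOn_const (c := r)).congr fun x hx => by
    simp [zeroExt_of_mem _ hx]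

namespace smoothAlg

/-- The element of `smoothAlg O` given by the restriction of a function smooth on `O`. -/
noncomputable def mk (f : E → ℝ) (hf : ContDiffOn ℝ ∞ f O) : smoothAlg O :=
  ⟨fun x => f x, hf.congr fun x hx => by simp [zeroExt_of_mem _ hx]⟩

lemma ext_of {a b : smoothAlg O} (h : ∀ x : O, a.1 x = b.1 x) : a = b :=
  Subtype.ext (funext h)

lemma fderiv_zeroExt (hO : IsOpen O) {f : E → ℝ} {g : smoothAlg O}
    (hfg : ∀ x : O, g.1 x = f x) (x : O) :
    fderiv ℝ (zeroExt g.1) x = fderiv ℝ f x := by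
  apply Filter.EventuallyEq.fderiv_eq
  filter_upwards [hO.mem_nhds x.2] with y hy
  rw [zeroExt_of_mem _ hy]
  exact hfg ⟨y, hy⟩

lemma differentiableAt_zeroExt (hO : IsOpen O) (g : smoothAlg O) (x : O) :
    DifferentiableAt ℝ (zeroExt g.1) x :=
  (g.2.contDiffAt (hO.mem_nhds x.2)).differentiableAt (by simp)

/-- Directional differentiation as a derivation of `smoothAlg O`. -/
noncomputable def dir (hO : IsOpen O) (h : E) : Derivation ℝ (smoothAlg O) (smoothAlg O) where
  toFun g := mk (fun x => fderiv ℝ (zeroExt g.1) x h)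
    ((g.2.fderiv_of_isOpen hO (m := ∞) (by simp)).clm_apply contDiffOn_const)
  map_add' a b := ext_of fun x => by
    have := fderiv_zeroExt hO (g := a + b) (f := zeroExt a.1 + zeroExt b.1)
      (fun y => by simp [zeroExt_of_mem _ y.2]) x
    rw [fderiv_add (differentiableAt_zeroExt hO a x) (differentiableAt_zeroExt hO b x)] at this
    exact congrArg (fun L => L h) this
  map_smul' c a := ext_of fun x => by
    have := fderiv_zeroExt hO (g := c • a) (f := c • zeroExt a.1)
      (fun y => by simp [zeroExt_of_mem _ y.2]) x
    rw [fderiv_const_smul (differentiableAt_zeroExt hO a x)] at this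
    exact congrArg (fun L => L h) this
  map_one_eq_zero' := ext_of fun x => by
    have := fderiv_zeroExt hO (g := 1) (f := fun _ => 1) (fun y => by simp) x
    rw [fderiv_const_apply] at this
    exact congrArg (fun L => L h) this
  leibniz' a b := ext_of fun x => by
    have := fderiv_zeroExt hO (g := a * b) (f := zeroExt a.1 * zeroExt b.1)
      (fun y => by simp [zeroExt_of_mem _ y.2]) x
    rw [fderiv_mul (differentiableAt_zeroExt hO a x) (differentiableAt_zeroExt hO b x)] at this
    have h2 := congrArg (fun L => L h) this
    simpa [mk, zeroExt_of_mem _ x.2] using h2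

lemma dir_apply (hO : IsOpen O) (h : E) {f : E → ℝ} {g : smoothAlg O}
    (hfg : ∀ x : O, g.1 x = f x) (x : O) : (dir hO h g).1 x = fderiv ℝ f x h :=
  congrArg (fun L => L h) (fderiv_zeroExt hO hfg x)

/-- Evaluation at a point of `O`. -/
noncomputable def evalAt (z : O) : smoothAlg O →ₐ[ℝ] ℝ :=
  (Pi.evalAlgHom ℝ (fun _ : O => ℝ) z).comp (smoothAlg O).val

lemma evalAt_apply (z : O) (g : smoothAlg O) : evalAt z g = g.1 z := rfl

end smoothAlg

end SmoothOn

section ReflFrame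

variable {m : ℕ}

variable (m) in
/-- Pairs `(w, v)` with `w ≠ 0`. -/
def offZero : Set (Evec m × Evec m) := {z | z.1 ≠ 0}

lemma isOpen_offZero : IsOpen (offZero m) := isOpen_ne_fun continuous_fst continuous_const

/-- `∂/∂w_i` on functions of `(w, v)`. -/
def derW (i : Fin m) : Derivation ℝ (smoothAlg (offZero m)) (smoothAlg (offZero m)) :=
  smoothAlg.dir isOpen_offZero (EuclideanSpace.single i 1, 0)

/-- `∂/∂v_i` on functions of `(w, v)`. -/
def derV (i : Fin m) : Derivation ℝ (smoothAlg (offZero m)) (smoothAlg (offZero m)) :=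
  smoothAlg.dir isOpen_offZero (0, EuclideanSpace.single i 1)

/-- The coordinate `w_i`. -/
def coordW (i : Fin m) : smoothAlg (offZero m) :=
  smoothAlg.mk (fun z => z.1 i) (by fun_prop)

/-- The coordinate `v_i`. -/
def coordV (i : Fin m) : smoothAlg (offZero m) :=
  smoothAlg.mk (fun z => z.2 i) (by fun_prop)

/-- The function `|w|⁻²`. -/
def invSq : smoothAlg (offZero m) :=
  smoothAlg.mk (fun z => (‖z.1‖ ^ 2)⁻¹) (by
    have h : ContDiffOn ℝ ∞ (fun z : Evec m × Evec m => ‖z.1‖ ^ 2) (offZero m) :=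
      (contDiff_fst.norm_sq ℝ).contDiffOn
    exact h.inv fun z hz => pow_ne_zero 2 (norm_ne_zero_iff.2 hz))

/-- The function `|w|^{-m}`. -/
def invPow : smoothAlg (offZero m) :=
  smoothAlg.mk (fun z => (‖z.1‖ ^ m)⁻¹) (by
    have h : ContDiffOn ℝ ∞ (fun z : Evec m × Evec m => ‖z.1‖ ^ m) (offZero m) :=
      (ContDiffOn.norm ℝ contDiff_fst.contDiffOn fun z hz => hz).pow m
    refine h.inv fun z hz => pow_ne_zero _ (norm_ne_zero_iff.2 hz))

/-- The coordinate `q_i` of `q = R_w v`. -/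
def coordQ (i : Fin m) : smoothAlg (offZero m) :=
  coordV i - 2 * invSq * (∑ l, coordW l * coordV l) * coordW i

lemma derW_coordW (i j : Fin m) : derW i (coordW j) = if i = j then 1 else 0 := by
  refine smoothAlg.ext_of fun z => ?_
  rw [derW, smoothAlg.dir_apply isOpen_offZero _ (f := fun z => z.1 j) fun _ => rfl]
  rw [show (fun z : Evec m × Evec m => z.1 j) = ((EuclideanSpace.proj j : Evec m →L[ℝ] ℝ).comp
    (ContinuousLinearMap.fst ℝ (Evec m) (Evec m))) from rfl, ContinuousLinearMap.fderiv]
  split_ifs with h <;> simp [h, eq_comm]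

lemma derW_coordV (i j : Fin m) : derW i (coordV j) = 0 := by
  refine smoothAlg.ext_of fun z => ?_
  rw [derW, smoothAlg.dir_apply isOpen_offZero _ (f := fun z => z.2 j) fun _ => rfl]
  rw [show (fun z : Evec m × Evec m => z.2 j) = ((EuclideanSpace.proj j : Evec m →L[ℝ] ℝ).comp
    (ContinuousLinearMap.snd ℝ (Evec m) (Evec m))) from rfl, ContinuousLinearMap.fderiv]
  simp

lemma derV_coordW (i j : Fin m) : derV i (coordW j) = 0 := by
  refine smoothAlg.ext_of fun z => ?_
  rw [derV, smoothAlg.dir_apply isOpen_offZero _ (f := fun z => z.1 j) fun _ => rfl]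
  rw [show (fun z : Evec m × Evec m => z.1 j) = ((EuclideanSpace.proj j : Evec m →L[ℝ] ℝ).comp
    (ContinuousLinearMap.fst ℝ (Evec m) (Evec m))) from rfl, ContinuousLinearMap.fderiv]
  simp

lemma derV_coordV (i j : Fin m) : derV i (coordV j) = if i = j then 1 else 0 := by
  refine smoothAlg.ext_of fun z => ?_
  rw [derV, smoothAlg.dir_apply isOpen_offZero _ (f := fun z => z.2 j) fun _ => rfl]
  rw [show (fun z : Evec m × Evec m => z.2 j) = ((EuclideanSpace.proj j : Evec m →L[ℝ] ℝ).comp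
    (ContinuousLinearMap.snd ℝ (Evec m) (Evec m))) from rfl, ContinuousLinearMap.fderiv]
  split_ifs with h <;> simp [h, eq_comm]

lemma invSq_mul : (invSq : smoothAlg (offZero m)) * ∑ i, coordW i * coordW i = 1 := by
  refine smoothAlg.ext_of fun z => ?_
  have hz : ‖z.1.1‖ ^ 2 ≠ 0 := pow_ne_zero 2 (norm_ne_zero_iff.2 z.2)
  have : ∑ i, z.1.1 i * z.1.1 i = ‖z.1.1‖ ^ 2 := by
    rw [EuclideanSpace.real_norm_sq_eq]
    exact Finset.sum_congr rfl fun i _ => (sq _).symm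
  simp [invSq, coordW, smoothAlg.mk, this, hz]

lemma invPow_mul : (invPow : smoothAlg (offZero m)) * invPow = invSq ^ m := by
  refine smoothAlg.ext_of fun z => ?_
  change (‖z.1.1‖ ^ m)⁻¹ * (‖z.1.1‖ ^ m)⁻¹ = ((‖z.1.1‖ ^ 2)⁻¹) ^ m
  rw [← mul_inv, inv_pow, ← pow_mul, ← pow_add]
  congr 2; ring

lemma isUnit_invPow : IsUnit (invPow : smoothAlg (offZero m)) := by
  have h1 : IsUnit (invSq : smoothAlg (offZero m)) := IsUnit.of_mul_eq_one _ invSq_mul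
  exact isUnit_of_mul_isUnit_left (invPow_mul (m := m) ▸ h1.pow m)

lemma derW_sum_coordW_mul (i : Fin m) :
    derW i (∑ l, coordW l * coordW l) = 2 * coordW i := by
  simp only [map_sum, Derivation.leibniz, derW_coordW, smul_eq_mul, Finset.sum_add_distrib,
    mul_ite, mul_one, mul_zero, Finset.sum_ite_eq, Finset.mem_univ, if_true]
  ring

lemma derW_invSq (i : Fin m) :
    derW i (invSq : smoothAlg (offZero m)) = -2 * coordW i * invSq ^ 2 := by
  have h := congrArg (derW i) (invSq_mul (m := m))
  rw [Derivation.leibniz, derW_sum_coordW_mul, Derivation.map_one_eq_zero] at h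
  simp only [smul_eq_mul] at h
  linear_combination invSq * h - derW i invSq * invSq_mul (m := m)

lemma derV_invSq (i : Fin m) : derV i (invSq : smoothAlg (offZero m)) = 0 := by
  have h := congrArg (derV i) (invSq_mul (m := m))
  rw [Derivation.leibniz, Derivation.map_one_eq_zero, map_sum] at h
  simp only [Derivation.leibniz, derV_coordW, smul_eq_mul, mul_zero, add_zero,
    Finset.sum_const_zero, zero_add] at h
  linear_combination invSq * h - derV i invSq * invSq_mul (m := m)

lemma isUnit_two : IsUnit (2 : smoothAlg (offZero m)) := by
  refine IsUnit.of_mul_eq_one (algebraMap ℝ _ (1 / 2)) ?_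
  rw [← map_ofNat (algebraMap ℝ (smoothAlg (offZero m))) 2, ← map_mul]
  norm_num

lemma derW_invPow (i : Fin m) :
    derW i (invPow : smoothAlg (offZero m))
      = -(m : smoothAlg (offZero m)) * coordW i * invSq * invPow := by
  have h := congrArg (derW i) (invPow_mul (m := m))
  rw [Derivation.leibniz, Derivation.leibniz_pow, derW_invSq] at h
  simp only [smul_eq_mul, nsmul_eq_mul] at h
  have h2 : (m : smoothAlg (offZero m)) * (invSq ^ (m - 1) * (-2 * coordW i * invSq ^ 2))
      = (m : smoothAlg (offZero m)) * (-2 * coordW i * invSq * invSq ^ m) := by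
    obtain _ | m := m
    · simp
    · simp only [Nat.add_sub_cancel]; ring
  rw [h2, ← invPow_mul] at h
  apply isUnit_two.mul_left_cancel
  apply isUnit_invPow.mul_left_cancel
  linear_combination h

lemma derV_invPow (i : Fin m) : derV i (invPow : smoothAlg (offZero m)) = 0 := by
  have h := congrArg (derV i) (invPow_mul (m := m))
  rw [Derivation.leibniz, Derivation.leibniz_pow, derV_invSq] at h
  simp only [smul_eq_mul, smul_zero, mul_zero] at h
  apply isUnit_two.mul_left_cancel
  apply isUnit_invPow.mul_left_cancel
  linear_combination h

lemma sum_coordW_coordQ :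
    ∑ l, coordW l * coordQ l = -∑ l : Fin m, coordW l * coordV l := by
  have : ∑ l : Fin m, coordW l * coordQ l = ∑ l, coordW l * coordV l
      - 2 * (∑ l, coordW l * coordV l) * (invSq * ∑ l, coordW l * coordW l) := by
    have e : ∀ S : smoothAlg (offZero m), ∑ l, coordW l * (coordV l - 2 * invSq * S * coordW l)
        = ∑ l, coordW l * coordV l - 2 * S * (invSq * ∑ l, coordW l * coordW l) := by
      intro S
      simp only [Finset.mul_sum, ← Finset.sum_sub_distrib]
      exact Finset.sum_congr rfl fun i _ => by ring
    simp only [coordQ]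
    rw [e]
  rw [this, invSq_mul]; ring

lemma coordV_eq (i : Fin m) :
    coordV i = coordQ i - 2 * invSq * (∑ l, coordW l * coordQ l) * coordW i := by
  rw [sum_coordW_coordQ, coordQ]; ring

lemma isReflFrame : IsReflFrame (derW (m := m)) derV coordW coordQ invSq invPow where
  X_w := derW_coordW
  V_w := derV_coordW
  X_q i j := by
    have h : derW i (∑ l : Fin m, coordW l * coordV l) = coordV i := by
      simp [Derivation.leibniz, derW_coordW, derW_coordV]
    rw [sum_coordW_coordQ]
    simp only [coordQ, map_sub, Derivation.leibniz, h, derW_coordV, derW_coordW, derW_invSq,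
      smul_eq_mul, IsReflFrame.derivation_two]
    split_ifs <;> ring
  V_q i j := by
    have h : derV i (∑ l : Fin m, coordW l * coordV l) = coordW i := by
      simp [Derivation.leibniz, derV_coordW, derV_coordV]
    simp only [coordQ, map_sub, Derivation.leibniz, h, derV_coordV, derV_coordW, derV_invSq,
      smul_eq_mul, IsReflFrame.derivation_two]
    split_ifs <;> ring
  X_σ := derW_invSq
  V_σ := derV_invSq
  X_ρ := derW_invPow
  V_ρ := derV_invPow
  σ_mul := invSq_mul

lemma coordQ_apply (i : Fin m) (z : offZero m) : (coordQ i).1 z = reflv z.1.1 z.1.2 i := by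
  have h : ∑ l, z.1.1 l * z.1.2 l = ⟪z.1.1, z.1.2⟫ := by
    simp [PiLp.inner_apply, mul_comm]
  rw [← smoothAlg.evalAt_apply, coordQ]
  simp only [map_sub, map_mul, map_sum, map_ofNat]
  change z.1.2 i - 2 * (‖z.1.1‖ ^ 2)⁻¹ * (∑ l, z.1.1 l * z.1.2 l) * z.1.1 i = _
  rw [h, reflv]
  simp only [PiLp.sub_apply, PiLp.smul_apply, smul_eq_mul]
  ring

lemma sum_coordQ_mul (z : offZero m) : (∑ i, coordQ i * coordQ i).1 z = ‖z.1.2‖ ^ 2 := by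
  have h1 : ∑ i, coordQ i * coordQ i = ∑ i : Fin m, coordV i * coordV i := by
    have : ∑ i : Fin m, coordQ i * coordQ i = ∑ i : Fin m, coordV i * coordV i
        - 4 * invSq * (∑ l, coordW l * coordV l) ^ 2
        + 4 * invSq * (∑ l, coordW l * coordV l) ^ 2 * (invSq * ∑ l, coordW l * coordW l) := by
      have e : ∀ S : smoothAlg (offZero m), ∑ i : Fin m,
          (coordV i - 2 * invSq * S * coordW i) * (coordV i - 2 * invSq * S * coordW i)
          = ∑ i : Fin m, coordV i * coordV i - 4 * invSq * S * (∑ l, coordW l * coordV l)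
          + 4 * invSq * S ^ 2 * (invSq * ∑ l, coordW l * coordW l) := by
        intro S
        simp only [Finset.mul_sum, ← Finset.sum_sub_distrib, ← Finset.sum_add_distrib]
        exact Finset.sum_congr rfl fun i _ => by ring
      simp only [coordQ]
      rw [e]; ring
    rw [this, invSq_mul]; ring
  rw [h1, EuclideanSpace.real_norm_sq_eq, ← smoothAlg.evalAt_apply, map_sum]
  exact Finset.sum_congr rfl fun i _ => (sq _).symm

lemma pd1_eq {f : Evec m → Evec m → ℝ} {g : smoothAlg (offZero m)}
    (h : ∀ z : offZero m, f z.1.1 z.1.2 = g.1 z) (i : Fin m) (z : offZero m) :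
    pd1 i f z.1.1 z.1.2 = (derW i g).1 z := by
  have hd : DifferentiableAt ℝ (fun z : Evec m × Evec m => f z.1 z.2) z.1 := by
    refine (smoothAlg.differentiableAt_zeroExt isOpen_offZero g z).congr_of_eventuallyEq ?_
    filter_upwards [isOpen_offZero.mem_nhds z.2] with y hy
    rw [zeroExt_of_mem _ hy]
    exact h ⟨y, hy⟩
  rw [derW, smoothAlg.dir_apply isOpen_offZero _ (f := fun z => f z.1 z.2) fun z => (h z).symm]
  have h2 : fderiv ℝ ((fun z : Evec m × Evec m => f z.1 z.2) ∘ fun e => (e, z.1.2)) z.1.1 = _ :=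
    fderiv_comp z.1.1 hd (hasFDerivAt_prodMk_left (𝕜 := ℝ) z.1.1 z.1.2).differentiableAt
  rw [(hasFDerivAt_prodMk_left (𝕜 := ℝ) z.1.1 z.1.2).fderiv] at h2
  refine (congrArg (fun L => L (EuclideanSpace.single i 1)) h2).trans ?_
  simp

lemma pd2_eq {f : Evec m → Evec m → ℝ} {g : smoothAlg (offZero m)}
    (h : ∀ z : offZero m, f z.1.1 z.1.2 = g.1 z) (i : Fin m) (z : offZero m) :
    pd2 i f z.1.1 z.1.2 = (derV i g).1 z := by
  have hd : DifferentiableAt ℝ (fun z : Evec m × Evec m => f z.1 z.2) z.1 := by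
    refine (smoothAlg.differentiableAt_zeroExt isOpen_offZero g z).congr_of_eventuallyEq ?_
    filter_upwards [isOpen_offZero.mem_nhds z.2] with y hy
    rw [zeroExt_of_mem _ hy]
    exact h ⟨y, hy⟩
  rw [derV, smoothAlg.dir_apply isOpen_offZero _ (f := fun z => f z.1 z.2) fun z => (h z).symm]
  have h2 : fderiv ℝ ((fun z : Evec m × Evec m => f z.1 z.2) ∘ fun e => (z.1.1, e)) z.1.2 = _ :=
    fderiv_comp z.1.2 hd (hasFDerivAt_prodMk_right (𝕜 := ℝ) z.1.1 z.1.2).differentiableAt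
  rw [(hasFDerivAt_prodMk_right (𝕜 := ℝ) z.1.1 z.1.2).fderiv] at h2
  refine (congrArg (fun L => L (EuclideanSpace.single i 1)) h2).trans ?_
  simp

lemma reflection_kernel_eq (b : Fin m → ℝ) (P : MvPolynomial (Fin m) ℝ) (z : offZero m) :
    (∑ j, b j * z.1.1 j) / ‖z.1.1‖ ^ m *
        MvPolynomial.eval (fun i => reflv z.1.1 z.1.2 i) P
      = (invPow * (∑ j, algebraMap ℝ _ (b j) * coordW j) *
        MvPolynomial.aeval coordQ P : smoothAlg (offZero m)).1 z := by
  rw [← smoothAlg.evalAt_apply, map_mul, map_mul, MvPolynomial.comp_aeval_apply, map_sum]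
  simp only [map_mul, AlgHom.commutes]
  simp only [smoothAlg.evalAt_apply, coordQ_apply]
  rw [div_eq_inv_mul, MvPolynomial.aeval_def, MvPolynomial.eval₂_eq_eval_map]
  simp only [Algebra.algebraMap_self, MvPolynomial.map_id]
  rfl

lemma sum_mul_pd1_pd2_pd1_eq {f : Evec m → Evec m → ℝ} {g : smoothAlg (offZero m)}
    (hfg : ∀ z : offZero m, f z.1.1 z.1.2 = g.1 z) (z : offZero m) :
    ∑ i, ∑ j, z.1.2 i * pd1 i (pd2 j (pd1 j f)) z.1.1 z.1.2 = smoothAlg.evalAt z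
      (∑ i, coordV i * derW i (IsReflFrame.divT derW derV g)) := by
  rw [map_sum]
  refine Finset.sum_congr rfl fun i _ => ?_
  rw [map_mul, IsReflFrame.divT, map_sum, map_sum, ← Finset.mul_sum]
  refine congrArg₂ (· * ·) rfl (Finset.sum_congr rfl fun j _ => ?_)
  exact pd1_eq (pd2_eq (pd1_eq hfg j) j) i z

lemma sum_pd2_pd1_pd2_pd1_eq {f : Evec m → Evec m → ℝ} {g : smoothAlg (offZero m)}
    (hfg : ∀ z : offZero m, f z.1.1 z.1.2 = g.1 z) (z : offZero m) :
    ∑ i, ∑ j, pd2 i (pd1 i (pd2 j (pd1 j f))) z.1.1 z.1.2 = smoothAlg.evalAt z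
      (IsReflFrame.divT derW derV (IsReflFrame.divT derW derV g)) := by
  rw [Finset.sum_comm, IsReflFrame.divT, IsReflFrame.divT]
  simp only [map_sum]
  rw [Finset.sum_comm]
  exact Finset.sum_congr rfl fun j _ => Finset.sum_congr rfl fun i _ =>
    pd2_eq (pd1_eq (pd2_eq (pd1_eq hfg i) i) j) j z

/-- `⟨b, w⟩ |w|^{-m} P(R_w v)` is annihilated by the bosonic Laplacian when `P ∈ ℋ_k`. -/
theorem Dk_reflection_kernel {k : ℕ} (hm : 3 ≤ m) (hk : 1 ≤ k) (b : Fin m → ℝ)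
    (P : MvPolynomial (Fin m) ℝ) (hP : P.IsHomogeneous k)
    (hΔ : ∑ i, MvPolynomial.pderiv i (MvPolynomial.pderiv i P) = 0) {w : Evec m} (hw : w ≠ 0)
    (v : Evec m) :
    Dk m k (fun w v => (∑ j, b j * w j) / ‖w‖ ^ m *
      MvPolynomial.eval (fun i => reflv w v i) P) w v = 0 := by
  have hE : IsReflFrame.Euler (k : ℤ) P := by
    have := hP.sum_X_mul_pderiv
    simpa [IsReflFrame.Euler] using this
  have key := isReflFrame.bosonic_kernel_identity b P hE hΔ _ rfl
  have hfg := reflection_kernel_eq b P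
  set z : offZero m := ⟨(w, v), hw⟩ with hz
  generalize (invPow * (∑ j, algebraMap ℝ (smoothAlg (offZero m)) (b j) * coordW j) *
        MvPolynomial.aeval coordQ P) = g at key hfg
  generalize hf : (fun w v : Evec m => (∑ j, b j * w j) / ‖w‖ ^ m *
      MvPolynomial.eval (fun i => reflv w v i) P) = f
  have hfg : ∀ z : offZero m, f z.1.1 z.1.2 = g.1 z := fun z => by
    rw [← hfg, ← hf]
  have t1 : ∑ i, pd1 i (pd1 i f) z.1.1 z.1.2
      = smoothAlg.evalAt z (∑ i, derW i (derW i g)) := by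
    rw [map_sum]
    exact Finset.sum_congr rfl fun i _ => pd1_eq (pd1_eq hfg i) i z
  have t2 := sum_mul_pd1_pd2_pd1_eq hfg z
  have t3 := sum_pd2_pd1_pd2_pd1_eq hfg z
  have key2 := congrArg (smoothAlg.evalAt z) key
  simp only [← coordV_eq] at key2
  rw [map_add, map_sub, map_mul, map_mul, map_mul, map_mul, map_mul, map_mul,
    map_sub, map_sub, map_add, map_mul, smoothAlg.evalAt_apply _ (∑ i, coordQ i * coordQ i),
    sum_coordQ_mul, ← t1, ← t2, ← t3] at key2
  simp only [map_natCast, map_ofNat, map_zero] at key2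
  have hm' : (3 : ℝ) ≤ m := by exact_mod_cast hm
  have hk' : (1 : ℝ) ≤ k := by exact_mod_cast hk
  have hN : (m : ℝ) + 2 * k - 2 ≠ 0 := by linarith
  have hN2 : (m : ℝ) + 2 * k - 4 ≠ 0 := by linarith
  rw [Dk]
  simp only [hz] at key2
  field_simp
  linear_combination key2

end ReflFrame

section PolynomialFunctions

open MvPolynomial

variable {m : ℕ}

/-- The polynomial function on `ℝ^m` given by `P`. -/
def polyFun (P : MvPolynomial (Fin m) ℝ) (x : Evec m) : ℝ := eval (fun i => x i) P

lemma contDiff_polyFun (P : MvPolynomial (Fin m) ℝ) : ContDiff ℝ ∞ (polyFun P) := by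
  induction P using MvPolynomial.induction_on with
  | C a => exact (funext fun x => by simp [polyFun] : polyFun (C a) = fun _ => a) ▸ contDiff_const
  | add p q hp hq =>
    exact (funext fun x => by simp [polyFun] : polyFun (p + q) = polyFun p + polyFun q) ▸ hp.add hq
  | mul_X p i hp =>
    have h : ContDiff ℝ ∞ (fun x : Evec m => x i) := by fun_prop
    exact (funext fun x => by simp [polyFun] : polyFun (p * X i) = polyFun p * fun x => x i) ▸
      hp.mul h

lemma differentiable_polyFun (P : MvPolynomial (Fin m) ℝ) : Differentiable ℝ (polyFun P) :=
  (contDiff_polyFun P).differentiable (by simp)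

lemma pdv_polyFun (P : MvPolynomial (Fin m) ℝ) (i : Fin m) :
    pdv i (polyFun P) = polyFun (pderiv i P) := by
  funext x
  induction P using MvPolynomial.induction_on with
  | C a =>
    have : (polyFun (C a) : Evec m → ℝ) = fun _ => a := by funext; simp [polyFun]
    simp [pdv, this, polyFun]
  | add p q hp hq =>
    have : polyFun (p + q) = polyFun p + polyFun q := by funext; simp [polyFun]
    rw [pdv, this, fderiv_add (differentiable_polyFun p x) (differentiable_polyFun q x)]
    refine (congrArg₂ (· + ·) hp hq).trans ?_
    simp [polyFun]
  | mul_X p j hp =>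
    have h : polyFun (p * X j) = polyFun p * fun x : Evec m => x j := by
      funext; simp [polyFun]
    have hd : DifferentiableAt ℝ (fun x : Evec m => x j) x := by fun_prop
    have hj : fderiv ℝ (fun x : Evec m => x j) x = EuclideanSpace.proj j :=
      (EuclideanSpace.proj j : Evec m →L[ℝ] ℝ).fderiv
    rw [pdv, h, fderiv_mul (differentiable_polyFun p x) hd, hj]
    have hp' : (fderiv ℝ (polyFun p) x) (EuclideanSpace.single i 1) = polyFun (pderiv i p) x := hp
    simp only [add_apply, smul_apply, hp',
      Derivation.leibniz, pderiv_X]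
    by_cases hij : i = j
    · subst hij; simp [polyFun]
    · simp [polyFun, Ne.symm hij]

lemma polyFun_injective : Function.Injective (polyFun : MvPolynomial (Fin m) ℝ → Evec m → ℝ) := by
  intro P Q h
  refine MvPolynomial.funext fun x => ?_
  exact congrFun h (WithLp.toLp 2 x)

lemma polyFun_smul {P : MvPolynomial (Fin m) ℝ} {k : ℕ} (hP : P.IsHomogeneous k) (c : ℝ)
    (x : Evec m) : polyFun P (c • x) = c ^ k * polyFun P x := by
  simp only [polyFun, eval_eq', Finset.mul_sum]
  refine Finset.sum_congr rfl fun d hd => ?_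
  have hdk : ∑ i, d i = k := by
    have := hP (mem_support_iff.1 hd)
    rw [← this, show Finsupp.weight 1 d = d.degree by rw [Finsupp.degree_eq_weight_one]; rfl,
      Finsupp.degree_eq_sum]
  have : ∏ i, (c • x) i ^ d i = c ^ k * ∏ i, x i ^ d i := by
    simp only [PiLp.smul_apply, smul_eq_mul, mul_pow, Finset.prod_mul_distrib,
      Finset.prod_pow_eq_pow_sum, hdk]
  rw [this]; ring

/-- Elements of `ℋ_k` come from homogeneous harmonic polynomials of degree `k`. -/
lemma IsHk.exists_polynomial {k : ℕ} {p : Evec m → ℝ} (hp : IsHk m k p) :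
    ∃ P : MvPolynomial (Fin m) ℝ, P.IsHomogeneous k ∧ p = polyFun P ∧
      ∑ i, pderiv i (pderiv i P) = 0 := by
  obtain ⟨⟨Q, hQ⟩, hhom, hlap⟩ := hp
  have hpQ : p = polyFun Q := by funext x; exact hQ x
  have hpP : p = polyFun (homogeneousComponent k Q) := by
    funext x
    set a : ℕ → ℝ := fun n => polyFun (homogeneousComponent n Q) x
    set N := Q.totalDegree + 1
    have h1 : ∀ c : ℝ, p (c • x) = ∑ n ∈ Finset.range N, c ^ n * a n := by
      intro c
      rw [hQ, ← sum_homogeneousComponent Q, map_sum]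
      exact Finset.sum_congr rfl fun n _ =>
        polyFun_smul (homogeneousComponent_isHomogeneous n Q) c x
    have h2 : Polynomial.C (p x) * Polynomial.X ^ k
        = ∑ n ∈ Finset.range N, Polynomial.C (a n) * Polynomial.X ^ n := by
      refine Polynomial.funext fun c => ?_
      rw [Polynomial.eval_finsetSum]
      simp only [Polynomial.eval_mul, Polynomial.eval_C, Polynomial.eval_pow, Polynomial.eval_X]
      rw [mul_comm, ← hhom, h1]
      exact Finset.sum_congr rfl fun n _ => mul_comm _ _
    have h3 := congrArg (fun q => Polynomial.coeff q k) h2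
    simp only [Polynomial.coeff_C_mul_X_pow, Polynomial.finsetSum_coeff, if_true,
      Finset.sum_ite_eq, Finset.mem_range] at h3
    rw [h3]
    split_ifs with hkN
    · rfl
    · rw [homogeneousComponent_eq_zero k Q (by omega)]
      simp [polyFun]
  refine ⟨homogeneousComponent k Q, homogeneousComponent_isHomogeneous k Q, hpP, ?_⟩
  refine polyFun_injective (funext fun x => ?_)
  have := hlap x
  rw [hpP, lapl] at this
  simp only [pdv_polyFun] at this
  simpa [polyFun] using this

/-- Precomposition with a linear map preserves homogeneous polynomial functions. -/
lemma exists_polyFun_comp {P : MvPolynomial (Fin m) ℝ} {k : ℕ} (hP : P.IsHomogeneous k)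
    (L : Evec m →ₗ[ℝ] Evec m) :
    ∃ Q : MvPolynomial (Fin m) ℝ, Q.IsHomogeneous k ∧ ∀ x, polyFun Q x = polyFun P (L x) := by
  refine ⟨aeval (fun i => ∑ j, C (L (EuclideanSpace.single j 1) i) * X j) P, ?_, fun x => ?_⟩
  · have := hP.aeval (n := 1) (fun i => ∑ j, C (L (EuclideanSpace.single j 1) i) * X j) (fun i =>
      IsHomogeneous.sum _ _ _ fun j _ => by
        simpa using (isHomogeneous_C (Fin m) (L (EuclideanSpace.single j 1) i)).mul
          (isHomogeneous_X ℝ j))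
    simpa using this
  · have hx : L x = ∑ j, x j • L (EuclideanSpace.single j 1) := by
      conv_lhs => rw [show x = ∑ j, x j • (EuclideanSpace.single j (1 : ℝ) : Evec m) by
        ext i; simp [Finset.sum_apply, Pi.single_apply]]
      simp
    simp only [polyFun]
    rw [← coe_aeval_eq_eval]
    change aeval _ (aeval _ P) = _
    rw [comp_aeval_apply, ← coe_aeval_eq_eval]
    change aeval _ P = aeval _ P
    congr 2
    funext i
    rw [hx]
    simp [mul_comm]

/-- Homogeneous polynomials of degree `k` are determined linearly by finitely many of their
values on the closed unit ball. -/
lemma exists_interpolation (m k : ℕ) :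
    ∃ (ι : Type) (_ : Fintype ι) (pt : ι → Evec m) (φ : ι → MvPolynomial (Fin m) ℝ),
      (∀ i, ‖pt i‖ ≤ 1) ∧ (∀ i, (φ i).IsHomogeneous k) ∧
      ∀ Q : MvPolynomial (Fin m) ℝ, Q.IsHomogeneous k → ∀ x,
        polyFun Q x = ∑ i, polyFun Q (pt i) * polyFun (φ i) x := by
  set V := homogeneousSubmodule (Fin m) ℝ k
  have : FiniteDimensional ℝ V :=
    Module.Finite.iff_fg.2 (homogeneousSubmodule_fg (σ := Fin m) (R := ℝ) k)
  set ev : Evec m → Module.Dual ℝ V := fun x =>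
    (aeval (fun i => x i) : MvPolynomial (Fin m) ℝ →ₐ[ℝ] ℝ).toLinearMap ∘ₗ V.subtype with hev
  have hev' : ∀ x (q : V), ev x q = polyFun q.1 x := fun x q => by
    simp [hev, polyFun, aeval_eq_eval]
  set S : Set (Module.Dual ℝ V) := ev '' closedBall 0 1
  have hS : Submodule.span ℝ S = ⊤ := by
    have h0 : (Submodule.span ℝ S).dualCoannihilator = ⊥ := by
      rw [eq_bot_iff]
      intro q hq
      rw [Submodule.mem_dualCoannihilator] at hq
      have hq' : ∀ x : Evec m, polyFun q.1 x = 0 := by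
        intro x
        have hc : (0 : ℝ) < 1 + ‖x‖ := by positivity
        have hb : (1 + ‖x‖)⁻¹ • x ∈ closedBall (0 : Evec m) 1 := by
          rw [mem_closedBall_zero_iff, norm_smul, norm_inv, Real.norm_of_nonneg hc.le,
            inv_mul_le_iff₀ hc]
          linarith
        have h1 := hq _ (Submodule.subset_span ⟨_, hb, rfl⟩)
        rw [hev', polyFun_smul q.2] at h1
        exact (mul_eq_zero.1 h1).resolve_left (pow_ne_zero _ (inv_ne_zero hc.ne'))
      have : q.1 = 0 := polyFun_injective (funext fun x => by rw [hq' x]; simp [polyFun])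
      simpa using this
    rw [← Subspace.dualCoannihilator_dualAnnihilator_eq (W := Submodule.span ℝ S), h0,
      Submodule.dualAnnihilator_bot]
  set B := Module.Basis.ofSpan hS.ge
  have : Fintype ((linearIndepOn_empty ℝ id).extend (Set.empty_subset S)) :=
    FiniteDimensional.fintypeBasisIndex B
  have hB : ∀ i, ∃ x ∈ closedBall (0 : Evec m) 1, ev x = B i := fun i =>
    Module.Basis.ofSpan_subset hS.ge ⟨i, rfl⟩
  choose pt hpt hptB using hB
  refine ⟨_, inferInstance, pt, fun i => ((Module.evalEquiv ℝ V).symm (B.coord i)).1,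
    fun i => mem_closedBall_zero_iff.1 (hpt i),
    fun i => ((Module.evalEquiv ℝ V).symm (B.coord i)).2, fun Q hQ x => ?_⟩
  set q : V := ⟨Q, hQ⟩
  have h : q = ∑ i, (B i q) • (Module.evalEquiv ℝ V).symm (B.coord i) := by
    apply (Module.evalEquiv ℝ V).injective
    rw [map_sum]
    simp only [map_smul, LinearEquiv.apply_symm_apply]
    exact (B.sum_dual_apply_smul_coord (Module.evalEquiv ℝ V q)).symm
  have h2 := congrArg (ev x) h
  simp only [map_sum, map_smul, smul_eq_mul] at h2
  simp only [hev', ← hptB] at h2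
  exact h2

end PolynomialFunctions

section Reduction

variable {m d k : ℕ}

instance : IsFiniteMeasure (sphereM m) := by
  unfold sphereM; infer_instance

lemma ae_sphereM_norm (m : ℕ) : ∀ᵐ u ∂(sphereM m), ‖u‖ = 1 := by
  rw [sphereM, ae_map_iff measurable_subtype_coe.aemeasurable
    (measurableSet_eq_fun measurable_norm measurable_const)]
  exact Eventually.of_forall fun u => by simp

lemma reflv_eq_reflection (w u : Evec m) : reflv w u = (ℝ ∙ w)ᗮ.reflection u := by
  rw [Submodule.reflection_orthogonal_apply, Submodule.reflection_singleton_apply, reflv]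
  simp only [RCLike.ofReal_real_eq_id, id]
  module

lemma norm_reflv (w u : Evec m) : ‖reflv w u‖ = ‖u‖ := by
  rw [reflv_eq_reflection, LinearIsometryEquiv.norm_map]

lemma IsZk.reflv_left {Z : Evec m → Evec m → ℝ} (hZ : IsZk m k Z) (w u v : Evec m) :
    Z (reflv w u) v = Z u (reflv w v) := by
  rw [reflv_eq_reflection, reflv_eq_reflection,
    ← hZ.2.2.2.2 ((ℝ ∙ w)ᗮ.reflection) u ((ℝ ∙ w)ᗮ.reflection v), Submodule.reflection_reflection]

/-- Reproducing property for functions agreeing with an element of `ℋ_k` on the closed ball. -/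
lemma IsZk.integral_mul {Z : Evec m → Evec m → ℝ} (hZ : IsZk m k Z) {p h : Evec m → ℝ}
    (hp : IsHk m k p) (hh : ∀ u ∈ closedBall (0 : Evec m) 1, h u = p u) (v : Evec m) :
    ∫ u, Z u v * h u ∂(sphereM m) = p v := by
  rw [← hZ.2.1 p hp v]
  refine integral_congr_ae ?_
  filter_upwards [ae_sphereM_norm m] with u hu
  rw [hh u (by simp [hu])]

lemma IsZk.integral_PH_mul {Z : Evec (d + 1) → Evec (d + 1) → ℝ} (hZ : IsZk (d + 1) k Z)
    {p h : Evec (d + 1) → ℝ} (hp : IsHk (d + 1) k p)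
    (hh : ∀ u ∈ closedBall (0 : Evec (d + 1)) 1, h u = p u) (x' t' : Evec d) (y : ℝ)
    (v : Evec (d + 1)) :
    ∫ u, PH d k Z x' y t' u v * h u ∂(sphereM (d + 1))
      = cmk (d + 1) k * (y / ‖upP d x' y - upP d t' 0‖ ^ (d + 1)) *
        p (reflv (upP d x' y - upP d t' 0) v) := by
  simp only [PH, hZ.reflv_left, mul_assoc]
  rw [integral_const_mul, integral_const_mul, hZ.integral_mul hp hh]

lemma upP_downP_lastP (x : Evec (d + 1)) : upP d (downP d x) (lastP d x) = x := by
  ext i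
  refine Fin.lastCases ?_ (fun j => ?_) i <;> simp [upP, downP, lastP]

/-- The inclusion `t' ↦ (t', 0)` of the boundary hyperplane. -/
def bdry (d : ℕ) : Evec d →ₗ[ℝ] Evec (d + 1) where
  toFun t := upP d t 0
  map_add' s t := by
    ext i
    refine Fin.lastCases ?_ (fun j => ?_) i <;> simp [upP]
  map_smul' c t := by
    ext i
    refine Fin.lastCases ?_ (fun j => ?_) i <;> simp [upP]

lemma lastP_upP (x' : Evec d) (y : ℝ) : lastP d (upP d x' y) = y := by simp [upP, lastP]

lemma lastP_sub (x z : Evec (d + 1)) : lastP d (x - z) = lastP d x - lastP d z := by simp [lastP]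

lemma lastP_sub_bdry (x : Evec (d + 1)) (t : Evec d) : lastP d (x - bdry d t) = lastP d x := by
  rw [lastP_sub]
  simp [bdry, lastP_upP]

lemma norm_upP_sq (x' : Evec d) (y : ℝ) : ‖upP d x' y‖ ^ 2 = ‖x'‖ ^ 2 + y ^ 2 := by
  rw [EuclideanSpace.real_norm_sq_eq, EuclideanSpace.real_norm_sq_eq, Fin.sum_univ_castSucc]
  simp [upP]

lemma norm_bdry (t : Evec d) : ‖bdry d t‖ = ‖t‖ := by
  have : ‖bdry d t‖ ^ 2 = ‖t‖ ^ 2 := by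
    change ‖upP d t 0‖ ^ 2 = _
    rw [norm_upP_sq]; ring
  exact (pow_left_inj₀ (norm_nonneg _) (norm_nonneg _) two_ne_zero).1 this

lemma continuous_bdry : Continuous (bdry d) := (bdry d).continuous_of_finiteDimensional

lemma abs_lastP_le (x : Evec (d + 1)) : |lastP d x| ≤ ‖x‖ := by
  simpa [lastP] using PiLp.norm_apply_le x (Fin.last d)

lemma continuous_lastP : Continuous (lastP d) := by
  unfold lastP; fun_prop

end Reduction

section Convolution

variable {d : ℕ}

/-- Smooth kernels off the origin with the decay needed to differentiate
`x ↦ ∫ g(t) K(x - (t, 0)) dt` once. -/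
structure PoissonDecay (d : ℕ) (K : Evec (d + 1) → ℝ) : Prop where
  smooth : ContDiffOn ℝ ∞ K {w | w ≠ 0}
  bound : ∀ δ : ℝ, 0 < δ → ∃ C : ℝ, ∀ w, δ ≤ lastP d w →
    |K w| ≤ C * lastP d w / ‖w‖ ^ (d + 1) ∧ ‖fderiv ℝ K w‖ ≤ C / ‖w‖ ^ (d + 1)

lemma ne_zero_of_lastP_pos {w : Evec (d + 1)} (h : 0 < lastP d w) : w ≠ 0 := by
  rintro rfl
  simp [lastP] at h

lemma exists_one_add_norm_le {δ : ℝ} (hδ : 0 < δ) (M : ℝ) (hM : 0 ≤ M) :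
    ∃ c : ℝ, 0 < c ∧ ∀ (x : Evec (d + 1)) (t : Evec d), ‖x‖ ≤ M → δ ≤ lastP d x →
      1 + ‖t‖ ≤ c * ‖x - bdry d t‖ := by
  refine ⟨(1 + M) / δ + 1, by positivity, fun x t hx hxδ => ?_⟩
  have h1 : δ ≤ ‖x - bdry d t‖ := by
    refine hxδ.trans ?_
    rw [← lastP_sub_bdry x t]
    exact (le_abs_self _).trans (abs_lastP_le _)
  have h2 : ‖t‖ ≤ ‖x - bdry d t‖ + M := by
    rw [← norm_bdry t]
    have := norm_sub_norm_le (bdry d t) x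
    rw [norm_sub_rev] at this
    linarith
  have h3 : 1 + M ≤ (1 + M) / δ * ‖x - bdry d t‖ := by
    rw [div_mul_eq_mul_div, le_div_iff₀ hδ]
    exact mul_le_mul_of_nonneg_left h1 (by linarith)
  linarith

lemma exists_inv_pow_le {δ : ℝ} (hδ : 0 < δ) (M : ℝ) (hM : 0 ≤ M) :
    ∃ c : ℝ, 0 < c ∧ ∀ (x : Evec (d + 1)) (t : Evec d), ‖x‖ ≤ M → δ ≤ lastP d x →
      1 / ‖x - bdry d t‖ ^ (d + 1) ≤ c * ((1 + ‖t‖) ^ (d + 1))⁻¹ := by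
  obtain ⟨c, hc, h⟩ := exists_one_add_norm_le (d := d) hδ M hM
  refine ⟨c ^ (d + 1), by positivity, fun x t hx hxδ => ?_⟩
  have h1 := h x t hx hxδ
  have h2 : 0 < ‖x - bdry d t‖ := by
    have : 0 < c * ‖x - bdry d t‖ := lt_of_lt_of_le (by positivity) h1
    exact pos_of_mul_pos_right this hc.le
  rw [← div_eq_mul_inv, div_le_div_iff₀ (by positivity) (by positivity), one_mul, ← mul_pow]
  exact pow_le_pow_left₀ (by positivity) h1 _

lemma continuous_kernel_comp {F : Type*} [TopologicalSpace F] {K : Evec (d + 1) → F}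
    (hK : ContinuousOn K {w | w ≠ 0}) {x : Evec (d + 1)} (hx : 0 < lastP d x) :
    Continuous fun t : Evec d => K (x - bdry d t) := by
  rw [← continuousOn_univ]
  refine hK.comp (continuous_const.sub continuous_bdry).continuousOn fun t _ => ?_
  exact ne_zero_of_lastP_pos (by rwa [lastP_sub_bdry])

variable {g : Evec d → ℝ} {K : Evec (d + 1) → ℝ}

lemma PoissonDecay.integrable (hK : PoissonDecay d K) (hg : AEStronglyMeasurable g)
    (hgi : Integrable fun t => g t * ((1 + ‖t‖) ^ (d + 1))⁻¹) {x : Evec (d + 1)}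
    (hx : 0 < lastP d x) : Integrable fun t => g t * K (x - bdry d t) := by
  obtain ⟨C, hC⟩ := hK.bound _ hx
  obtain ⟨c, hc, h⟩ := exists_inv_pow_le (d := d) hx ‖x‖ (norm_nonneg _)
  refine (hgi.norm.const_mul (|C| * lastP d x * c)).mono'
    (hg.mul (continuous_kernel_comp hK.smooth.continuousOn hx).aestronglyMeasurable)
    (Eventually.of_forall fun t => ?_)
  have h1 := (hC (x - bdry d t) (by rw [lastP_sub_bdry])).1
  rw [lastP_sub_bdry] at h1
  have h2 := h x t le_rfl le_rfl
  rw [norm_mul, Real.norm_eq_abs (K _), norm_mul, Real.norm_of_nonneg (by positivity :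
    0 ≤ ((1 + ‖t‖) ^ (d + 1))⁻¹)]
  calc ‖g t‖ * |K (x - bdry d t)| ≤ ‖g t‖ * (|C| * lastP d x * (c * ((1 + ‖t‖) ^ (d + 1))⁻¹)) := by
        refine mul_le_mul_of_nonneg_left ?_ (norm_nonneg _)
        refine h1.trans ?_
        rw [div_eq_mul_one_div]
        exact mul_le_mul (mul_le_mul_of_nonneg_right (le_abs_self C) hx.le) h2 (by positivity)
          (by positivity)
    _ = _ := by ring

lemma isOpen_ne_zero : IsOpen {w : Evec (d + 1) | w ≠ 0} := isOpen_ne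

lemma PoissonDecay.hasFDerivAt (hK : PoissonDecay d K) (hg : AEStronglyMeasurable g)
    (hgi : Integrable fun t => g t * ((1 + ‖t‖) ^ (d + 1))⁻¹) {x : Evec (d + 1)}
    (hx : 0 < lastP d x) :
    Integrable (fun t => g t • fderiv ℝ K (x - bdry d t)) ∧
    HasFDerivAt (fun x => ∫ t, g t * K (x - bdry d t))
      (∫ t, g t • fderiv ℝ K (x - bdry d t)) x := by
  set δ := lastP d x / 2 with hδ
  have hδ0 : 0 < δ := by positivity
  obtain ⟨C, hC⟩ := hK.bound δ hδ0
  obtain ⟨c, hc, h⟩ := exists_inv_pow_le (d := d) hδ0 (‖x‖ + 1) (by positivity)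
  set s : Set (Evec (d + 1)) := {z | δ < lastP d z} ∩ ball x 1 with hs
  have hso : IsOpen s := (isOpen_lt continuous_const continuous_lastP).inter isOpen_ball
  have hxs : x ∈ s := ⟨by simp only [Set.mem_ofPred_eq]; linarith, mem_ball_self one_pos⟩
  have hbound : ∀ t, ∀ z ∈ s, ‖g t • fderiv ℝ K (z - bdry d t)‖
      ≤ |C| * c * ‖g t * ((1 + ‖t‖) ^ (d + 1))⁻¹‖ := by
    intro t z hz
    have hz1 : ‖z‖ ≤ ‖x‖ + 1 := by
      have := norm_sub_norm_le z x
      have h2 : ‖z - x‖ < 1 := by simpa [dist_eq_norm] using hz.2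
      linarith
    have hz2 : δ ≤ lastP d z := le_of_lt hz.1
    have h1 := (hC (z - bdry d t) (by rwa [lastP_sub_bdry])).2
    have h2 := h z t hz1 hz2
    rw [norm_smul, norm_mul, Real.norm_of_nonneg (by positivity :
      0 ≤ ((1 + ‖t‖) ^ (d + 1))⁻¹)]
    calc ‖g t‖ * ‖fderiv ℝ K (z - bdry d t)‖
        ≤ ‖g t‖ * (|C| * (c * ((1 + ‖t‖) ^ (d + 1))⁻¹)) := by
          refine mul_le_mul_of_nonneg_left ?_ (norm_nonneg _)
          refine h1.trans ?_
          rw [div_eq_mul_one_div]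
          exact mul_le_mul (le_abs_self C) h2 (by positivity) (by positivity)
      _ = _ := by ring
  have hcont : ContinuousOn (fderiv ℝ K) {w | w ≠ 0} :=
    hK.smooth.continuousOn_fderiv_of_isOpen isOpen_ne_zero (by simp)
  have hmeas' : AEStronglyMeasurable (fun t => g t • fderiv ℝ K (x - bdry d t)) :=
    hg.smul (continuous_kernel_comp hcont hx).aestronglyMeasurable
  have hbi : Integrable fun t : Evec d => |C| * c * ‖g t * ((1 + ‖t‖) ^ (d + 1))⁻¹‖ :=
    hgi.norm.const_mul _
  refine ⟨hbi.mono' hmeas' (Eventually.of_forall fun t => hbound t x hxs), ?_⟩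
  refine hasFDerivAt_integral_of_dominated_of_fderiv_le (hso.mem_nhds hxs) ?_
    (hK.integrable hg hgi hx) hmeas' (Eventually.of_forall hbound) hbi
    (Eventually.of_forall fun t z hz => ?_)
  · filter_upwards [hso.mem_nhds hxs] with z hz
    exact hg.mul (continuous_kernel_comp hK.smooth.continuousOn
      (hδ0.trans hz.1)).aestronglyMeasurable
  · have hz0 : z - bdry d t ≠ 0 := ne_zero_of_lastP_pos
      (by rw [lastP_sub_bdry]; exact hδ0.trans hz.1)
    have hd : HasFDerivAt K (fderiv ℝ K (z - bdry d t)) (z - bdry d t) :=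
      ((hK.smooth.contDiffAt (isOpen_ne_zero.mem_nhds hz0)).differentiableAt
        (by simp)).hasFDerivAt
    have hc : HasFDerivAt (fun z => K (z - bdry d t)) (fderiv ℝ K (z - bdry d t)) z := by
      have := hd.comp z ((hasFDerivAt_id z).sub_const (bdry d t))
      rw [ContinuousLinearMap.comp_id] at this
      exact this
    exact hc.const_mul (g t)

lemma PoissonDecay.pdv_integral (hK : PoissonDecay d K) (hg : AEStronglyMeasurable g)
    (hgi : Integrable fun t => g t * ((1 + ‖t‖) ^ (d + 1))⁻¹) {x : Evec (d + 1)}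
    (hx : 0 < lastP d x) (i : Fin (d + 1)) :
    Integrable (fun t => g t * pdv i K (x - bdry d t)) ∧
    pdv i (fun x => ∫ t, g t * K (x - bdry d t)) x = ∫ t, g t * pdv i K (x - bdry d t) := by
  obtain ⟨h1, h2⟩ := hK.hasFDerivAt hg hgi hx
  refine ⟨h1.apply_continuousLinearMap (EuclideanSpace.single i 1), ?_⟩
  rw [pdv, h2.fderiv, ContinuousLinearMap.integral_apply h1]
  rfl

end Convolution

section HomogeneousKernels

variable {E F : Type*} [NormedAddCommGroup E] [NormedSpace ℝ E] [NormedAddCommGroup F]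
  [NormedSpace ℝ F]

/-- Positive homogeneity of degree `-n` off the origin. -/
def NegHomogeneous (n : ℕ) (h : E → F) : Prop :=
  ∀ c : ℝ, 0 < c → ∀ w, w ≠ 0 → h (c • w) = (c ^ n)⁻¹ • h w

lemma NegHomogeneous.exists_norm_le [ProperSpace E] {n : ℕ} {h : E → F}
    (hh : NegHomogeneous n h) (hc : ContinuousOn h {w | w ≠ 0}) :
    ∃ C : ℝ, 0 ≤ C ∧ ∀ w, w ≠ 0 → ‖h w‖ ≤ C / ‖w‖ ^ n := by
  obtain ⟨C, hC⟩ := (isCompact_sphere (0 : E) 1).exists_bound_of_continuousOn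
    (hc.mono fun w hw => ne_zero_of_mem_unit_sphere ⟨w, hw⟩)
  refine ⟨|C|, abs_nonneg C, fun w hw => ?_⟩
  have hn : 0 < ‖w‖ := norm_pos_iff.2 hw
  have hs : ‖w‖⁻¹ • w ∈ sphere (0 : E) 1 := by
    simp [norm_smul, hn.ne']
  have h1 : h w = (‖w‖ ^ n)⁻¹ • h (‖w‖⁻¹ • w) := by
    rw [← hh ‖w‖ hn _ (ne_zero_of_mem_unit_sphere ⟨_, hs⟩), smul_smul, mul_inv_cancel₀ hn.ne',
      one_smul]
  rw [h1, norm_smul, norm_inv, norm_pow, norm_norm, div_eq_inv_mul]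
  exact mul_le_mul_of_nonneg_left ((hC _ hs).trans (le_abs_self C)) (by positivity)

lemma NegHomogeneous.fderiv_negHomogeneous {n : ℕ} {h : E → F} (hh : NegHomogeneous n h) :
    NegHomogeneous (n + 1) (fderiv ℝ h) := by
  intro c hc w hw
  have h1 : fderiv ℝ (fun w => h (c • w)) w = (c ^ n)⁻¹ • fderiv ℝ h w := by
    have : (fun w => h (c • w)) =ᶠ[𝓝 w] (c ^ n)⁻¹ • h := by
      filter_upwards [isOpen_ne.mem_nhds hw] with z hz using hh c hc z hz
    rw [this.fderiv_eq, fderiv_const_smul_field]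
    rfl
  rw [fderiv_comp_smul] at h1
  rw [pow_succ, mul_inv, mul_comm, mul_smul, ← h1, smul_smul, inv_mul_cancel₀ hc.ne', one_smul]

variable {d : ℕ}

lemma NegHomogeneous.pdv {n : ℕ} {h : Evec (d + 1) → ℝ} (hh : NegHomogeneous n h)
    (i : Fin (d + 1)) : NegHomogeneous (n + 1) (pdv i h) := by
  intro c hc w hw
  simp only [_root_.pdv]
  rw [hh.fderiv_negHomogeneous c hc w hw]
  rfl

lemma contDiffOn_pdv {h : Evec (d + 1) → ℝ} (hh : ContDiffOn ℝ ∞ h {w | w ≠ 0})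
    (i : Fin (d + 1)) : ContDiffOn ℝ ∞ (pdv i h) {w | w ≠ 0} :=
  (hh.fderiv_of_isOpen isOpen_ne_zero (m := ∞) (by simp)).clm_apply contDiffOn_const

/-- The kernel `w ↦ w_last |w|^{-(d+1)} P(R_w u)`. -/
def reflKer (P : MvPolynomial (Fin (d + 1)) ℝ) (u w : Evec (d + 1)) : ℝ :=
  lastP d w / ‖w‖ ^ (d + 1) * polyFun P (reflv w u)

variable (P : MvPolynomial (Fin (d + 1)) ℝ) (u : Evec (d + 1))

lemma contDiffOn_reflKer : ContDiffOn ℝ ∞ (reflKer P u) {w | w ≠ 0} := by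
  have hl : ContDiff ℝ ∞ (lastP d) := by unfold lastP; fun_prop
  have hn : ContDiffOn ℝ ∞ (fun w : Evec (d + 1) => ‖w‖) {w | w ≠ 0} :=
    ContDiffOn.norm ℝ contDiffOn_id fun w hw => hw
  have hr : ContDiffOn ℝ ∞ (fun w => reflv w u) {w | w ≠ 0} := by
    unfold reflv
    refine contDiffOn_const.sub (ContDiffOn.smul (ContDiffOn.div ?_ (hn.pow 2) fun w hw =>
      pow_ne_zero 2 (norm_ne_zero_iff.2 hw)) contDiffOn_id)
    exact contDiffOn_const.mul (ContDiffOn.inner ℝ contDiffOn_id contDiffOn_const)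
  exact (hl.contDiffOn.div (hn.pow (d + 1)) fun w hw =>
    pow_ne_zero _ (norm_ne_zero_iff.2 hw)).mul ((contDiff_polyFun P).comp_contDiffOn hr)

lemma reflv_smul_left {c : ℝ} (hc : 0 < c) (w : Evec (d + 1)) : reflv (c • w) u = reflv w u := by
  by_cases hw : w = 0
  · simp [hw, reflv]
  have hn : ‖w‖ ≠ 0 := norm_ne_zero_iff.2 hw
  rw [reflv, reflv, real_inner_smul_left, norm_smul, Real.norm_of_nonneg hc.le, smul_smul]
  congr 2
  field_simp

lemma negHomogeneous_reflKer : NegHomogeneous d (reflKer P u) := by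
  intro c hc w hw
  have hn : ‖w‖ ≠ 0 := norm_ne_zero_iff.2 hw
  have hl : lastP d (c • w) = c * lastP d w := by simp [lastP]
  rw [reflKer, reflKer, reflv_smul_left u hc, hl, norm_smul, Real.norm_of_nonneg hc.le,
    smul_eq_mul]
  field_simp
  ring

lemma poissonDecay_reflKer : PoissonDecay d (reflKer P u) where
  smooth := contDiffOn_reflKer P u
  bound δ hδ := by
    obtain ⟨C₁, hC₁⟩ := (isCompact_closedBall (0 : Evec (d + 1)) ‖u‖).exists_bound_of_continuousOn
      (contDiff_polyFun P).continuous.continuousOn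
    obtain ⟨C₂, hC₂, h₂⟩ := (negHomogeneous_reflKer P u).fderiv_negHomogeneous.exists_norm_le
      ((contDiffOn_reflKer P u).continuousOn_fderiv_of_isOpen isOpen_ne_zero (by simp))
    refine ⟨max C₁ C₂, fun w hw => ⟨?_, ?_⟩⟩
    · have hp := hC₁ (reflv w u) (by simp [norm_reflv])
      have hw0 : 0 ≤ lastP d w := hδ.le.trans hw
      rw [reflKer, abs_mul, abs_of_nonneg (by positivity), mul_div_assoc, mul_comm]
      exact mul_le_mul_of_nonneg_right (hp.trans (le_max_left _ _)) (by positivity)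
    · refine (h₂ w (ne_zero_of_lastP_pos (hδ.trans_le hw))).trans ?_
      gcongr
      exact le_max_right _ _

lemma poissonDecay_pdv_reflKer (i : Fin (d + 1)) : PoissonDecay d (pdv i (reflKer P u)) where
  smooth := contDiffOn_pdv (contDiffOn_reflKer P u) i
  bound δ hδ := by
    have hs := contDiffOn_pdv (contDiffOn_reflKer P u) i
    have hh := (negHomogeneous_reflKer P u).pdv i
    obtain ⟨C₁, hC₁, h₁⟩ := hh.exists_norm_le hs.continuousOn
    obtain ⟨C₂, hC₂, h₂⟩ := hh.fderiv_negHomogeneous.exists_norm_le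
      (hs.continuousOn_fderiv_of_isOpen isOpen_ne_zero (by simp))
    refine ⟨max (C₁ / δ) (C₂ / δ), fun w hw => ⟨?_, ?_⟩⟩
    · have hw0 : w ≠ 0 := ne_zero_of_lastP_pos (hδ.trans_le hw)
      refine (h₁ w hw0).trans ?_
      gcongr
      calc C₁ = C₁ / δ * δ := by field_simp
        _ ≤ max (C₁ / δ) (C₂ / δ) * lastP d w :=
          mul_le_mul (le_max_left _ _) hw hδ.le (le_max_of_le_left (by positivity))
    · have hw0 : w ≠ 0 := ne_zero_of_lastP_pos (hδ.trans_le hw)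
      have hn : 0 < ‖w‖ := norm_pos_iff.2 hw0
      have hδw : δ ≤ ‖w‖ := hw.trans ((le_abs_self _).trans (abs_lastP_le w))
      refine (h₂ w hw0).trans ?_
      calc C₂ / ‖w‖ ^ (d + 1 + 1) = C₂ / ‖w‖ / ‖w‖ ^ (d + 1) := by
            rw [pow_succ ‖w‖ (d + 1)]; field_simp
        _ ≤ C₂ / δ / ‖w‖ ^ (d + 1) := by gcongr
        _ ≤ _ := by gcongr; exact le_max_right _ _

end HomogeneousKernels

section SeparatedSums

variable {m : ℕ} {ι : Type*} [Fintype ι]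

/-- On `U`, `f` is the finite sum of the products `A l x * ψ l v`, with `ψ l` polynomial. -/
def HasSep (U : Set (Evec m)) (f : Evec m → Evec m → ℝ) (A : ι → Evec m → ℝ)
    (ψ : ι → MvPolynomial (Fin m) ℝ) : Prop :=
  ∀ x ∈ U, ∀ v, f x v = ∑ l, A l x * polyFun (ψ l) v

variable {U : Set (Evec m)} {f : Evec m → Evec m → ℝ} {A : ι → Evec m → ℝ}
  {ψ : ι → MvPolynomial (Fin m) ℝ}

lemma HasSep.pd1 (hf : HasSep U f A ψ) (hU : IsOpen U) (hA : ∀ l, DifferentiableOn ℝ (A l) U)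
    (i : Fin m) : HasSep U (pd1 i f) (fun l => pdv i (A l)) ψ := by
  intro x hx v
  have hd : ∀ l, DifferentiableAt ℝ (A l) x := fun l => (hA l).differentiableAt (hU.mem_nhds hx)
  have h : (fun x₁ => f x₁ v) =ᶠ[𝓝 x] fun x₁ => ∑ l, A l x₁ * polyFun (ψ l) v := by
    filter_upwards [hU.mem_nhds hx] with z hz using hf z hz v
  rw [_root_.pd1, h.fderiv_eq, fderiv_fun_sum fun l _ => (hd l).mul_const _,
    _root_.sum_apply]
  refine Finset.sum_congr rfl fun l _ => ?_
  rw [fderiv_mul_const (hd l)]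
  simp [pdv, mul_comm]

lemma HasSep.pd2 (hf : HasSep U f A ψ) (j : Fin m) :
    HasSep U (pd2 j f) A (fun l => MvPolynomial.pderiv j (ψ l)) := by
  intro x hx v
  have h : (fun v₁ => f x v₁) = fun v₁ => ∑ l, A l x * polyFun (ψ l) v₁ := funext (hf x hx)
  rw [_root_.pd2, h, fderiv_fun_sum fun l _ => (differentiable_polyFun (ψ l) v).const_mul _,
    _root_.sum_apply]
  refine Finset.sum_congr rfl fun l _ => ?_
  rw [fderiv_const_mul (differentiable_polyFun (ψ l) v), ← pdv_polyFun, pdv]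
  simp

/-- The coefficient with which `∂_{x_a} ∂_{x_b}` enters the bosonic Laplacian of a function
whose dependence on the second variable is `ψ`. -/
def bosonicCoeff (k : ℕ) (v : Evec m) (a b : Fin m) (ψ : MvPolynomial (Fin m) ℝ) : ℝ :=
  (if a = b then polyFun ψ v else 0)
    - 4 / ((m : ℝ) + 2 * k - 2) * (v a * polyFun (MvPolynomial.pderiv b ψ) v)
    + 4 * ‖v‖ ^ 2 / (((m : ℝ) + 2 * k - 2) * ((m : ℝ) + 2 * k - 4)) *
      polyFun (MvPolynomial.pderiv a (MvPolynomial.pderiv b ψ)) v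

lemma bosonicCoeff_smul (k : ℕ) (v : Evec m) (a b : Fin m) (c : ℝ)
    (ψ : MvPolynomial (Fin m) ℝ) :
    bosonicCoeff k v a b (c • ψ) = c * bosonicCoeff k v a b ψ := by
  simp only [bosonicCoeff, polyFun, Derivation.map_smul, MvPolynomial.smul_eval]
  split_ifs <;> ring

lemma HasSep.Dk_eq (hf : HasSep U f A ψ) (hU : IsOpen U)
    (hA : ∀ l, DifferentiableOn ℝ (A l) U) (hA' : ∀ l b, DifferentiableOn ℝ (pdv b (A l)) U)
    (k : ℕ) {x : Evec m} (hx : x ∈ U) (v : Evec m) :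
    Dk m k f x v = ∑ l, ∑ a, ∑ b, pdv a (pdv b (A l)) x * bosonicCoeff k v a b (ψ l) := by
  have h1 := fun j => hf.pd1 hU hA j
  have h11 := fun i j => (h1 j).pd1 hU (fun l => hA' l j) i
  have h121 := fun i j => ((h1 j).pd2 j).pd1 hU (fun l => hA' l j) i
  have t1 : ∑ i, _root_.pd1 i (_root_.pd1 i f) x v
      = ∑ l, ∑ a, ∑ b, pdv a (pdv b (A l)) x * (if a = b then polyFun (ψ l) v else 0) := by
    simp only [fun i => h11 i i x hx v, mul_ite, mul_zero, Finset.sum_ite_eq, Finset.mem_univ,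
      if_true]
    exact Finset.sum_comm
  have t2 : ∑ i, ∑ j, v i * _root_.pd1 i (_root_.pd2 j (_root_.pd1 j f)) x v
      = ∑ l, ∑ a, ∑ b, pdv a (pdv b (A l)) x *
        (v a * polyFun (MvPolynomial.pderiv b (ψ l)) v) := by
    simp only [fun i j => h121 i j x hx v, Finset.mul_sum]
    rw [Finset.sum_comm_cycle]
    refine Finset.sum_congr rfl fun l _ => Finset.sum_congr rfl fun a _ =>
      Finset.sum_congr rfl fun b _ => ?_
    ring
  have t3 : ∑ i, ∑ j, _root_.pd2 i (_root_.pd1 i (_root_.pd2 j (_root_.pd1 j f))) x v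
      = ∑ l, ∑ a, ∑ b, pdv a (pdv b (A l)) x *
        polyFun (MvPolynomial.pderiv a (MvPolynomial.pderiv b (ψ l))) v := by
    simp only [fun i j => (h121 i j).pd2 i x hx v]
    exact Finset.sum_comm_cycle
  rw [Dk, t1, t2, t3]
  simp only [Finset.mul_sum, ← Finset.sum_sub_distrib, ← Finset.sum_add_distrib, bosonicCoeff]
  refine Finset.sum_congr rfl fun l _ => Finset.sum_congr rfl fun a _ =>
    Finset.sum_congr rfl fun b _ => ?_
  ring

end SeparatedSums

section Vanishing

variable {d k : ℕ}

lemma exists_reflv_interpolation (m k : ℕ) :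
    ∃ (ι : Type) (_ : Fintype ι) (pt : ι → Evec m) (φ : ι → MvPolynomial (Fin m) ℝ),
      (∀ i, ‖pt i‖ ≤ 1) ∧ ∀ Q : MvPolynomial (Fin m) ℝ, Q.IsHomogeneous k → ∀ w v,
        polyFun Q (reflv w v) = ∑ l : ι × ι,
          polyFun Q (pt l.1) * polyFun (φ l.1) (reflv w (pt l.2)) * polyFun (φ l.2) v := by
  obtain ⟨ι, hι, pt, φ, hpt, hφ, hint⟩ := exists_interpolation m k
  refine ⟨ι, hι, pt, φ, hpt, fun Q hQ w v => ?_⟩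
  obtain ⟨R, hR, hRQ⟩ := exists_polyFun_comp hQ
    ((ℝ ∙ w)ᗮ.reflection.toLinearEquiv : Evec m →ₗ[ℝ] Evec m)
  have hRr : ∀ z, polyFun R z = polyFun Q (reflv w z) := fun z => by
    rw [hRQ, reflv_eq_reflection]; rfl
  rw [← hRr, hint R hR, Fintype.sum_prod_type_right]
  refine Finset.sum_congr rfl fun j _ => ?_
  rw [hRr, hint Q hQ, Finset.sum_mul]

lemma isOpen_lastP_pos : IsOpen {x : Evec (d + 1) | 0 < lastP d x} :=
  isOpen_lt continuous_const continuous_lastP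

lemma PoissonDecay.differentiableOn_integral {K : Evec (d + 1) → ℝ} (hK : PoissonDecay d K)
    {g : Evec d → ℝ} (hg : AEStronglyMeasurable g)
    (hgi : Integrable fun t => g t * ((1 + ‖t‖) ^ (d + 1))⁻¹) :
    DifferentiableOn ℝ (fun x => ∫ t, g t * K (x - bdry d t)) {x | 0 < lastP d x} :=
  fun _ hx => (hK.hasFDerivAt hg hgi hx).2.differentiableAt.differentiableWithinAt

theorem Dk_PHint_eq_zero (hm : 3 ≤ d + 1) (hk : 1 ≤ k) {Z : Evec (d + 1) → Evec (d + 1) → ℝ}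
    (hZ : IsZk (d + 1) k Z) {f : Evec d → Evec (d + 1) → ℝ}
    (hf : ∀ t, ∃ q, IsHk (d + 1) k q ∧ ∀ u ∈ closedBall (0 : Evec (d + 1)) 1, f t u = q u)
    (hfm : ∀ u, AEStronglyMeasurable fun t => f t u)
    (hfi : ∀ u, ‖u‖ ≤ 1 → Integrable fun t => f t u * ((1 + ‖t‖) ^ (d + 1))⁻¹)
    {x : Evec (d + 1)} (hx : 0 < lastP d x) (v : Evec (d + 1)) :
    Dk (d + 1) k (fun x₁ v₁ => PHint d k Z f (downP d x₁) (lastP d x₁) v₁) x v = 0 := by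
  obtain ⟨ι, _, pt, φ, hpt, hφ⟩ := exists_reflv_interpolation (d + 1) k
  choose q hq hfq using hf
  choose Q hQ hqQ hΔ using fun t => (hq t).exists_polynomial
  have hval : ∀ t i, polyFun (Q t) (pt i) = f t (pt i) := fun t i => by
    rw [hfq t _ (by simpa using hpt i), hqQ]
  let κ : ι × ι → Evec (d + 1) → ℝ := fun l => reflKer (φ l.1) (pt l.2)
  let g : ι × ι → Evec d → ℝ := fun l t => f t (pt l.1)
  let Φ : ι × ι → Evec (d + 1) → ℝ := fun l x => ∫ t, g l t * κ l (x - bdry d t)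
  have hg : ∀ l, AEStronglyMeasurable (g l) := fun l => hfm _
  have hgi : ∀ l, Integrable fun t => g l t * ((1 + ‖t‖) ^ (d + 1))⁻¹ := fun l => hfi _ (hpt _)
  have hker : ∀ t w v, lastP d w / ‖w‖ ^ (d + 1) * polyFun (Q t) (reflv w v)
      = ∑ l, g l t * κ l w * polyFun (φ l.2) v := fun t w v => by
    rw [hφ (Q t) (hQ t), Finset.mul_sum]
    refine Finset.sum_congr rfl fun l _ => ?_
    simp only [hval, κ, g, reflKer]
    ring
  have hsmooth : ∀ l, ContDiffOn ℝ ∞ (κ l) {w | w ≠ 0} := fun l => contDiffOn_reflKer _ _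
  have hkerDk : ∀ t w, w ≠ 0 → ∑ l, ∑ a, ∑ b, pdv a (pdv b (κ l)) w *
      (g l t * bosonicCoeff k v a b (φ l.2)) = 0 := fun t w hw => by
    have hsep : HasSep {w | w ≠ 0} (fun w v => (∑ j, (Pi.single (Fin.last d) 1 : _ → ℝ) j * w j) /
        ‖w‖ ^ (d + 1) * MvPolynomial.eval (fun i => reflv w v i) (Q t)) κ
        (fun l => g l t • φ l.2) := fun w _ v => by
      have := hker t w v
      simp only [lastP, polyFun] at this
      simp only [Pi.single_apply, ite_mul, one_mul, zero_mul, Finset.sum_ite_eq',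
        Finset.mem_univ, if_true, this, polyFun, MvPolynomial.smul_eval]
      exact Finset.sum_congr rfl fun l _ => by ring
    have := hsep.Dk_eq isOpen_ne_zero (fun l => (hsmooth l).differentiableOn (by simp))
      (fun l b => (contDiffOn_pdv (hsmooth l) b).differentiableOn (by simp)) k hw v
    rw [Dk_reflection_kernel hm hk _ (Q t) (hQ t) (hΔ t) hw] at this
    simpa only [bosonicCoeff_smul] using this.symm
  have hPH : HasSep {x | 0 < lastP d x}
      (fun x₁ v₁ => PHint d k Z f (downP d x₁) (lastP d x₁) v₁) Φ
      (fun l => cmk (d + 1) k • φ l.2) := fun z hz u => by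
    have : ∀ t, ∫ s, PH d k Z (downP d z) (lastP d z) t s u * f t s ∂(sphereM (d + 1))
        = ∑ l, g l t * κ l (z - bdry d t) * polyFun (cmk (d + 1) k • φ l.2) u := fun t => by
      rw [hZ.integral_PH_mul (hq t) (hfq t), upP_downP_lastP, mul_assoc, hqQ]
      have := hker t (z - bdry d t) u
      rw [lastP_sub_bdry] at this
      change _ * (_ / ‖z - bdry d t‖ ^ (d + 1) * polyFun (Q t) (reflv (z - bdry d t) u)) = _
      rw [this, Finset.mul_sum]
      simp only [polyFun, MvPolynomial.smul_eval]
      exact Finset.sum_congr rfl fun l _ => by ring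
    simp only [PHint, this]
    rw [integral_finsetSum _ fun l _ =>
      ((poissonDecay_reflKer _ _).integrable (hg l) (hgi l) hz).mul_const _]
    exact Finset.sum_congr rfl fun l _ => integral_mul_const _ _
  have hΦ1 : ∀ l b, Set.EqOn (pdv b (Φ l)) (fun x => ∫ t, g l t * pdv b (κ l) (x - bdry d t))
      {x | 0 < lastP d x} := fun l b z hz =>
    ((poissonDecay_reflKer _ _).pdv_integral (hg l) (hgi l) hz b).2
  have hd1 : ∀ l, DifferentiableOn ℝ (Φ l) {x | 0 < lastP d x} := fun l =>
    (poissonDecay_reflKer _ _).differentiableOn_integral (hg l) (hgi l)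
  have hd2 : ∀ l b, DifferentiableOn ℝ (pdv b (Φ l)) {x | 0 < lastP d x} := fun l b =>
    ((poissonDecay_pdv_reflKer _ _ b).differentiableOn_integral (hg l) (hgi l)).congr (hΦ1 l b)
  have hΦ2 : ∀ l a b, Integrable (fun t => g l t * pdv a (pdv b (κ l)) (x - bdry d t)) ∧
      pdv a (pdv b (Φ l)) x = ∫ t, g l t * pdv a (pdv b (κ l)) (x - bdry d t) := fun l a b => by
    have h := (poissonDecay_pdv_reflKer (φ l.1) (pt l.2) b).pdv_integral (hg l) (hgi l) hx a
    refine ⟨h.1, ?_⟩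
    rw [← h.2, pdv, pdv, ((hΦ1 l b).eventuallyEq_of_mem (isOpen_lastP_pos.mem_nhds hx)).fderiv_eq]
  rw [hPH.Dk_eq isOpen_lastP_pos hd1 hd2 k hx v]
  simp only [(hΦ2 _ _ _).2, bosonicCoeff_smul, ← integral_mul_const]
  have hI : ∀ l a b, Integrable fun t => g l t * pdv a (pdv b (κ l)) (x - bdry d t) *
      (cmk (d + 1) k * bosonicCoeff k v a b (φ l.2)) := fun l a b => (hΦ2 l a b).1.mul_const _
  have hI' : ∀ l a, Integrable fun t => ∑ b, g l t * pdv a (pdv b (κ l)) (x - bdry d t) *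
      (cmk (d + 1) k * bosonicCoeff k v a b (φ l.2)) := fun l a =>
    integrable_finsetSum _ fun b _ => hI l a b
  have hI'' : ∀ l, Integrable fun t => ∑ a, ∑ b, g l t * pdv a (pdv b (κ l)) (x - bdry d t) *
      (cmk (d + 1) k * bosonicCoeff k v a b (φ l.2)) := fun l =>
    integrable_finsetSum _ fun a _ => hI' l a
  simp only [← integral_finsetSum _ fun b _ => hI _ _ b, ← integral_finsetSum _ fun a _ => hI' _ a]
  rw [← integral_finsetSum _ fun l _ => hI'' l]
  refine integral_eq_zero_of_ae (Eventually.of_forall fun t => ?_)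
  have hne : x - bdry d t ≠ 0 := ne_zero_of_lastP_pos (by rwa [lastP_sub_bdry])
  rw [Pi.zero_apply, ← mul_zero (cmk (d + 1) k), ← hkerDk t _ hne]
  simp only [Finset.mul_sum]
  refine Finset.sum_congr rfl fun l _ => Finset.sum_congr rfl fun a _ =>
    Finset.sum_congr rfl fun b _ => ?_
  ring

end Vanishing

section LpBounds

variable {d k : ℕ}

/-- Jensen's inequality for a power and a measure that need not have mass one. -/
lemma lintegral_rpow_le {α : Type*} [MeasurableSpace α] {μ : Measure α} {p : ℝ} (hp : 1 ≤ p)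
    {g : α → ENNReal} (hg : AEMeasurable g μ) :
    (∫⁻ a, g a ∂μ) ^ p ≤ μ Set.univ ^ (p - 1) * ∫⁻ a, g a ^ p ∂μ := by
  have hp0 : 0 < p := by linarith
  have h := eLpNorm'_le_eLpNorm'_mul_rpow_measure_univ one_pos hp hg.aestronglyMeasurable
  simp only [eLpNorm', enorm_eq_self, ENNReal.rpow_one, div_one] at h
  refine (ENNReal.rpow_le_rpow h hp0.le).trans_eq ?_
  rw [ENNReal.mul_rpow_of_nonneg _ _ hp0.le, ← ENNReal.rpow_mul, ← ENNReal.rpow_mul, mul_comm]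
  congr 2
  · field_simp
  · rw [one_div_mul_cancel hp0.ne', ENNReal.rpow_one]

/-- The classical Poisson kernel of the half-space, up to a constant factor. -/
def halfPoisson (d : ℕ) (y : ℝ) (t : Evec d) : ENNReal :=
  ENNReal.ofReal (y / ‖upP d t y‖ ^ (d + 1))

lemma norm_upP (t : Evec d) (y : ℝ) : ‖upP d t y‖ = √(‖t‖ ^ 2 + y ^ 2) := by
  rw [← norm_upP_sq, Real.sqrt_sq (norm_nonneg _)]

lemma upP_sub_upP_zero (x' t' : Evec d) (y : ℝ) :
    upP d x' y - upP d t' 0 = upP d (x' - t') y := by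
  ext i
  refine Fin.lastCases ?_ (fun j => ?_) i <;> simp [upP]

lemma measurable_halfPoisson (y : ℝ) : Measurable (halfPoisson d y) := by
  unfold halfPoisson
  simp only [norm_upP]
  fun_prop

lemma integrable_inv_one_add_norm_pow :
    Integrable fun t : Evec d => ((1 + ‖t‖) ^ (d + 1))⁻¹ := by
  have h := integrable_one_add_norm (E := Evec d) (μ := volume) (r := (d + 1 : ℕ)) (by simp)
  refine h.congr (Eventually.of_forall fun t => ?_)
  simp only
  rw [Real.rpow_neg (by positivity), Real.rpow_natCast]

lemma lintegral_halfPoisson_one_lt_top : ∫⁻ t, halfPoisson d 1 t < ⊤ := by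
  obtain ⟨c, hc, h⟩ := exists_inv_pow_le (d := d) one_pos ‖upP d 0 1‖ (norm_nonneg _)
  refine lt_of_le_of_lt (lintegral_mono fun t => ?_)
    (integrable_inv_one_add_norm_pow.const_mul c).lintegral_lt_top
  refine ENNReal.ofReal_le_ofReal ?_
  have h1 := h (upP d 0 1) (-t) le_rfl (lastP_upP _ _).ge
  change 1 / ‖upP d 0 1 - upP d (-t) 0‖ ^ (d + 1) ≤ _ at h1
  rwa [upP_sub_upP_zero, zero_sub, neg_neg, norm_neg] at h1

lemma lintegral_halfPoisson {y : ℝ} (hy : 0 < y) :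
    ∫⁻ t, halfPoisson d y t = ∫⁻ t, halfPoisson d 1 t := by
  have hmap := Measure.map_addHaar_smul (volume : Measure (Evec d)) (inv_ne_zero hy.ne')
  have h1 : ∫⁻ t, halfPoisson d 1 (y⁻¹ • t) = ENNReal.ofReal (y ^ d) * ∫⁻ t, halfPoisson d 1 t := by
    rw [← lintegral_map (measurable_halfPoisson 1) (measurable_const_smul y⁻¹), hmap,
      lintegral_smul_measure]
    simp [abs_of_pos hy]
  have h2 : ∀ t, halfPoisson d 1 (y⁻¹ • t) = ENNReal.ofReal (y ^ d) * halfPoisson d y t := by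
    intro t
    have hn : ‖upP d (y⁻¹ • t) 1‖ = y⁻¹ * ‖upP d t y‖ := by
      rw [norm_upP, norm_upP, ← Real.sqrt_sq (inv_pos.2 hy).le, ← Real.sqrt_mul (sq_nonneg _),
        norm_smul, Real.norm_of_nonneg (by positivity), Real.sqrt_sq (inv_pos.2 hy).le]
      congr 1
      field_simp
    have hpos : 0 < ‖upP d t y‖ := by
      rw [norm_upP]; positivity
    rw [halfPoisson, halfPoisson, ← ENNReal.ofReal_mul (by positivity), hn,
      mul_pow, inv_pow]
    congr 1
    field_simp
    ring
  simp only [h2] at h1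
  rw [lintegral_const_mul _ (measurable_halfPoisson y)] at h1
  exact (ENNReal.mul_right_inj (by simpa using pow_pos hy d) ENNReal.ofReal_ne_top).1 h1

lemma enorm_rpow_eq_ofReal (a : ℝ) {p : ℝ} (hp : 0 ≤ p) :
    ‖a‖ₑ ^ p = ENNReal.ofReal (|a| ^ p) := by
  rw [Real.enorm_eq_ofReal_abs, ENNReal.ofReal_rpow_of_nonneg (abs_nonneg a) hp]

lemma IsZk.enorm_le {m : ℕ} {Z : Evec m → Evec m → ℝ} (hZ : IsZk m k Z) {u v : Evec m}
    (hu : ‖u‖ ≤ 1) (hv : ‖v‖ ≤ 1) : ‖Z u v‖ₑ ≤ hdim m k := by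
  rw [Real.enorm_eq_ofReal_abs, ← ENNReal.ofReal_natCast]
  exact ENNReal.ofReal_le_ofReal (hZ.2.2.2.1 u v hu hv)

lemma enorm_apply_le_lintegral {m : ℕ} {Z : Evec m → Evec m → ℝ} (hZ : IsZk m k Z)
    {p h : Evec m → ℝ} (hp : IsHk m k p) (hh : ∀ u ∈ closedBall (0 : Evec m) 1, h u = p u)
    {v : Evec m} (hv : ‖v‖ ≤ 1) : ‖h v‖ₑ ≤ hdim m k * ∫⁻ u, ‖h u‖ₑ ∂(sphereM m) := by
  rw [hh v (by simpa using hv), ← hZ.integral_mul hp hh v,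
    ← lintegral_const_mul' _ _ (ENNReal.natCast_ne_top _)]
  refine (enorm_integral_le_lintegral_enorm _).trans (lintegral_mono_ae ?_)
  filter_upwards [ae_sphereM_norm m] with u hu
  rw [enorm_mul]
  gcongr
  exact hZ.enorm_le hu.le hv

lemma MemLpH.lintegral_lt_top {p : ℝ} (hp : 1 ≤ p) {f : Evec d → Evec (d + 1) → ℝ}
    (hf : MemLpH d k p f) : ∫⁻ t, ∫⁻ u, ‖f t u‖ₑ ^ p ∂(sphereM (d + 1)) < ⊤ := by
  have hp0 : 0 < p := by linarith
  have h := hf.2.2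
  rw [lpH, ENNReal.rpow_lt_top_iff_of_pos (by positivity)] at h
  simpa only [enorm_rpow_eq_ofReal _ hp0.le] using h

lemma MemLpH.integrable_mul_inv {p : ℝ} (hp : 1 ≤ p) {f : Evec d → Evec (d + 1) → ℝ}
    (hf : MemLpH d k p f) {Z : Evec (d + 1) → Evec (d + 1) → ℝ} (hZ : IsZk (d + 1) k Z)
    {v : Evec (d + 1)} (hv : ‖v‖ ≤ 1) :
    Integrable fun t => f t v * ((1 + ‖t‖) ^ (d + 1))⁻¹ := by
  have hm : Measurable fun t => f t v := hf.1.comp (measurable_id.prodMk measurable_const)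
  have hw := integrable_inv_one_add_norm_pow (d := d)
  refine ⟨hm.aestronglyMeasurable.mul hw.1, ?_⟩
  have hbound : ∀ t, ‖f t v * ((1 + ‖t‖) ^ (d + 1))⁻¹‖ₑ ≤
      hdim (d + 1) k * (sphereM (d + 1) Set.univ * ‖((1 + ‖t‖) ^ (d + 1))⁻¹‖ₑ
        + ∫⁻ u, ‖f t u‖ₑ ^ p ∂(sphereM (d + 1))) := by
    intro t
    obtain ⟨q, hq, hfq⟩ := hf.2.1 t
    have hle : ∀ a : ENNReal, a ≤ 1 + a ^ p := fun a => by
      rcases le_total a 1 with h | h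
      · exact h.trans le_self_add
      · exact (ENNReal.le_rpow_self_of_one_le h hp).trans le_add_self
    have hw1 : ‖((1 + ‖t‖) ^ (d + 1))⁻¹‖ₑ ≤ 1 := by
      rw [Real.enorm_eq_ofReal (by positivity), ENNReal.ofReal_le_one]
      exact inv_le_one_of_one_le₀ (one_le_pow₀ (by linarith [norm_nonneg t]))
    rw [enorm_mul]
    calc ‖f t v‖ₑ * ‖((1 + ‖t‖) ^ (d + 1))⁻¹‖ₑ
        ≤ hdim (d + 1) k * (∫⁻ u, (1 + ‖f t u‖ₑ ^ p) ∂(sphereM (d + 1))) *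
          ‖((1 + ‖t‖) ^ (d + 1))⁻¹‖ₑ := by
          gcongr
          refine (enorm_apply_le_lintegral hZ hq hfq hv).trans ?_
          gcongr with u
          exact hle _
      _ = hdim (d + 1) k * (sphereM (d + 1) Set.univ * ‖((1 + ‖t‖) ^ (d + 1))⁻¹‖ₑ
          + (∫⁻ u, ‖f t u‖ₑ ^ p ∂(sphereM (d + 1))) * ‖((1 + ‖t‖) ^ (d + 1))⁻¹‖ₑ) := by
          rw [lintegral_add_left measurable_const, lintegral_const, one_mul]
          ring
      _ ≤ _ := by
          gcongr
          exact mul_le_of_le_one_right' hw1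
  refine lt_of_le_of_lt (lintegral_mono hbound) ?_
  rw [lintegral_const_mul' _ _ (ENNReal.natCast_ne_top _),
    lintegral_add_left' (hw.1.enorm.const_mul _),
    lintegral_const_mul' _ _ (measure_ne_top _ _)]
  exact ENNReal.mul_lt_top (by simp) (ENNReal.add_lt_top.2
    ⟨ENNReal.mul_lt_top (measure_lt_top _ _) hw.2, hf.lintegral_lt_top hp⟩)

lemma enorm_PHint_le {Z : Evec (d + 1) → Evec (d + 1) → ℝ} (hZ : IsZk (d + 1) k Z)
    (f : Evec d → Evec (d + 1) → ℝ) (x' : Evec d) {y : ℝ} (hy : 0 < y) {v : Evec (d + 1)}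
    (hv : ‖v‖ = 1) :
    ‖PHint d k Z f x' y v‖ₑ ≤ ‖cmk (d + 1) k‖ₑ * hdim (d + 1) k *
      ∫⁻ t, halfPoisson d y (x' - t) * ∫⁻ u, ‖f t u‖ₑ ∂(sphereM (d + 1)) := by
  have hC : ‖cmk (d + 1) k‖ₑ * hdim (d + 1) k ≠ ⊤ := by finiteness
  rw [PHint, ← lintegral_const_mul' _ _ hC]
  refine (enorm_integral_le_lintegral_enorm _).trans (lintegral_mono fun t => ?_)
  rw [← lintegral_const_mul' (halfPoisson d y (x' - t)) _ ENNReal.ofReal_ne_top,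
    ← lintegral_const_mul' _ _ hC]
  refine (enorm_integral_le_lintegral_enorm _).trans (lintegral_mono_ae ?_)
  filter_upwards [ae_sphereM_norm (d + 1)] with u hu
  rw [PH, upP_sub_upP_zero, enorm_mul, enorm_mul, enorm_mul, halfPoisson,
    Real.enorm_eq_ofReal (r := y / _) (by positivity)]
  calc _ ≤ ‖cmk (d + 1) k‖ₑ * ENNReal.ofReal (y / ‖upP d (x' - t) y‖ ^ (d + 1)) *
        hdim (d + 1) k * ‖f t u‖ₑ := by
        gcongr
        exact hZ.enorm_le (by rw [norm_reflv, hu]) hv.le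
    _ = _ := by ring

theorem lpH_PHint_le {p : ℝ} (hp : 1 ≤ p) {f : Evec d → Evec (d + 1) → ℝ}
    (hf : MemLpH d k p f) {Z : Evec (d + 1) → Evec (d + 1) → ℝ} (hZ : IsZk (d + 1) k Z)
    {y : ℝ} (hy : 0 < y) :
    lpH d p (fun x' v => PHint d k Z f x' y v) ≤
      ‖cmk (d + 1) k‖ₑ * hdim (d + 1) k *
        ((∫⁻ t, halfPoisson d 1 t) * sphereM (d + 1) Set.univ) * lpH d p f := by
  have hp0 : 0 < p := by linarith
  set C : ENNReal := ‖cmk (d + 1) k‖ₑ * hdim (d + 1) k with hC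
  set M : ENNReal := ∫⁻ t, halfPoisson d 1 t with hM
  set σ : ENNReal := sphereM (d + 1) Set.univ with hσ
  have hMtop : M ≠ ⊤ := lintegral_halfPoisson_one_lt_top.ne
  have hσtop : σ ≠ ⊤ := measure_ne_top _ _
  have hCtop : C ≠ ⊤ := by finiteness
  set G : Evec d → ENNReal := fun t => ∫⁻ u, ‖f t u‖ₑ ∂(sphereM (d + 1)) with hG
  set H : Evec d → ENNReal := fun t => ∫⁻ u, ‖f t u‖ₑ ^ p ∂(sphereM (d + 1)) with hH
  have hfm : Measurable fun q : Evec d × Evec (d + 1) => ‖f q.1 q.2‖ₑ := hf.1.enorm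
  have hGm : Measurable G := hfm.lintegral_prod_right'
  have hHm : Measurable H := (hfm.pow_const p).lintegral_prod_right'
  have hGH : ∀ t, G t ^ p ≤ σ ^ (p - 1) * H t := fun t =>
    lintegral_rpow_le hp (hf.1.comp (measurable_const.prodMk measurable_id)).enorm.aemeasurable
  have hconv : ∀ x', (∫⁻ t, halfPoisson d y (x' - t) * G t) ^ p ≤
      M ^ (p - 1) * σ ^ (p - 1) * ∫⁻ t, halfPoisson d y (x' - t) * H t := by
    intro x'
    have hPm : Measurable fun t => halfPoisson d y (x' - t) :=
      (measurable_halfPoisson y).comp (measurable_const.sub measurable_id)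
    have hmass : (volume.withDensity fun t => halfPoisson d y (x' - t)) Set.univ = M := by
      rw [withDensity_apply _ MeasurableSet.univ, Measure.restrict_univ,
        lintegral_sub_left_eq_self, lintegral_halfPoisson hy]
    have h := lintegral_rpow_le (μ := volume.withDensity fun t => halfPoisson d y (x' - t)) hp
      hGm.aemeasurable
    rw [hmass, lintegral_withDensity_eq_lintegral_mul _ hPm hGm,
      lintegral_withDensity_eq_lintegral_mul _ hPm (hGm.pow_const p)] at h
    refine h.trans ?_
    rw [mul_assoc, ← lintegral_const_mul' _ _
      (ENNReal.rpow_ne_top_of_nonneg (by linarith) hσtop)]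
    gcongr with t
    rw [Pi.mul_apply, mul_left_comm]
    gcongr
    exact hGH t
  have hswap : ∫⁻ x', ∫⁻ t, halfPoisson d y (x' - t) * H t = M * ∫⁻ t, H t := by
    rw [lintegral_lintegral_swap (((measurable_halfPoisson y).comp
      (measurable_fst.sub measurable_snd)).mul (hHm.comp measurable_snd)).aemeasurable,
      ← lintegral_const_mul _ hHm]
    refine lintegral_congr fun t => ?_
    have hPm : Measurable fun x => halfPoisson d y (x - t) :=
      (measurable_halfPoisson y).comp (measurable_id.sub measurable_const)
    rw [lintegral_mul_const _ hPm, lintegral_sub_right_eq_self, lintegral_halfPoisson hy]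
  have hpow : ∀ a : ENNReal, a ^ (p - 1) * a = a ^ p := fun a => by
    conv_lhs => rw [← ENNReal.rpow_one a, ← ENNReal.rpow_mul, one_mul]
    rw [← ENNReal.rpow_add_of_nonneg _ _ (by linarith) zero_le_one, sub_add_cancel]
  have hmain : ∫⁻ x', ∫⁻ v, ‖PHint d k Z f x' y v‖ₑ ^ p ∂(sphereM (d + 1)) ≤
      (C * (M * σ)) ^ p * ∫⁻ t, H t := by
    calc ∫⁻ x', ∫⁻ v, ‖PHint d k Z f x' y v‖ₑ ^ p ∂(sphereM (d + 1))
        ≤ ∫⁻ x', C ^ p * M ^ (p - 1) * σ ^ (p - 1) * σ *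
          ∫⁻ t, halfPoisson d y (x' - t) * H t := by
          refine lintegral_mono fun x' => ?_
          calc ∫⁻ v, ‖PHint d k Z f x' y v‖ₑ ^ p ∂(sphereM (d + 1))
              ≤ ∫⁻ _, (C * ∫⁻ t, halfPoisson d y (x' - t) * G t) ^ p ∂(sphereM (d + 1)) := by
                refine lintegral_mono_ae ?_
                filter_upwards [ae_sphereM_norm (d + 1)] with v hv
                exact ENNReal.rpow_le_rpow (enorm_PHint_le hZ f x' hy hv) hp0.le
            _ = C ^ p * (∫⁻ t, halfPoisson d y (x' - t) * G t) ^ p * σ := by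
                rw [lintegral_const, ENNReal.mul_rpow_of_nonneg _ _ hp0.le]
            _ ≤ C ^ p * (M ^ (p - 1) * σ ^ (p - 1) *
                ∫⁻ t, halfPoisson d y (x' - t) * H t) * σ := by
                gcongr
                exact hconv x'
            _ = _ := by ring
      _ = C ^ p * (M ^ (p - 1) * M) * (σ ^ (p - 1) * σ) * ∫⁻ t, H t := by
          rw [lintegral_const_mul' _ _ (by finiteness), hswap]
          ring
      _ = _ := by
          rw [hpow, hpow, ENNReal.mul_rpow_of_nonneg C _ hp0.le,
            ENNReal.mul_rpow_of_nonneg M _ hp0.le, mul_assoc (C ^ p)]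
  simp only [lpH, ← enorm_rpow_eq_ofReal _ hp0.le]
  refine (ENNReal.rpow_le_rpow hmain (by positivity)).trans_eq ?_
  rw [ENNReal.mul_rpow_of_nonneg _ _ (by positivity), ← ENNReal.rpow_mul,
    mul_one_div_cancel hp0.ne', ENNReal.rpow_one]

end LpBounds

/-- Dirichlet problem in the upper half-space with `L^p` data,
parts (1) and (2). Here `m = d+1 ≥ 3` and the constant depends only on `m` and `k`. -/
theorem stmt_4 (d k : ℕ) (hm : 3 ≤ d + 1) (hk : 1 ≤ k)
    (Z : Evec (d + 1) → Evec (d + 1) → ℝ) (hZ : IsZk (d + 1) k Z) :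
    ∃ c : ℝ, 0 < c ∧
      ∀ p : ℝ, 1 ≤ p →
        ∀ f : Evec d → Evec (d + 1) → ℝ, MemLpH d k p f →
          (∀ x : Evec (d + 1), 0 < lastP d x → ∀ v : Evec (d + 1), ‖v‖ < 1 →
            Dk (d + 1) k (fun x₁ v₁ => PHint d k Z f (downP d x₁) (lastP d x₁) v₁) x v = 0) ∧
          (∀ y : ℝ, 0 < y →
            lpH d p (fun x' v => PHint d k Z f x' y v) ≤ ENNReal.ofReal c * lpH d p f) := by
  set B : ENNReal := ‖cmk (d + 1) k‖ₑ * hdim (d + 1) k *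
    ((∫⁻ t, halfPoisson d 1 t) * sphereM (d + 1) Set.univ) with hB
  have hBtop : B ≠ ⊤ := by
    have := (lintegral_halfPoisson_one_lt_top (d := d)).ne
    finiteness
  refine ⟨B.toReal + 1, by positivity, fun p hp f hf => ⟨fun x hx v _ => ?_, fun y hy => ?_⟩⟩
  · exact Dk_PHint_eq_zero hm hk hZ hf.2.1
      (fun u => (hf.1.comp (measurable_id.prodMk measurable_const)).aestronglyMeasurable)
      (fun u hu => hf.integrable_mul_inv hp hZ hu) hx v
  · refine (lpH_PHint_le hp hf hZ hy).trans ?_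
    gcongr
    rw [ENNReal.le_ofReal_iff_toReal_le hBtop (by positivity)]
    linarith
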